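/- arXiv:1609.02765 — 3 statements merged into one kernel-verified Lean document; each statement's English description precedes it below -/
import Mathlib

section
/- Let X be the n×n generic matrix over a field K and for 1 ≤ k ≤ n let I_k be the ideal of R = K[x_{ij}] generated by all k×k minors of X whose column set is {1, 2, ..., k} (i.e., minors [a_1,...,a_k | 1,...,k] for 1 ≤ a_1 < ... < a_k ≤ n). Then the height of I_k is at least n − k + 1; in fact the n − k + 1 minors [i, i+1, ..., i+k−1 | 1, ..., k] for i = 1, ..., n−k+1 form a regular sequence in R. -/
open MvPolynomial Matrix

/-- The height of an ideal: the infimum, over prime ideals `P` containing `I`,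
of the height of `P` in the poset of prime ideals. -/
noncomputable def idealHeight {R : Type*} [CommRing R] (I : Ideal R) : ℕ∞ :=
  ⨅ (P : PrimeSpectrum R) (_ : I ≤ P.asIdeal), Order.height P


lemma grob_cop {σ : Type*} {a b c : σ →₀ ℕ} (h : a ≤ b + c) (hd : ∀ s, a s = 0 ∨ b s = 0) : a ≤ c := by
  intro s
  have := h s
  rcases hd s with h1 | h1 <;> (simp [h1] at *; try omega)

open scoped MonomialOrder in
lemma grob_red {σ K : Type*} [Field K] (m : MonomialOrder σ) (B : Set (MvPolynomial σ K))
    (hB : ∀ b ∈ B, b ≠ 0) (g : MvPolynomial σ K) :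
    ∃ r, g - r ∈ Ideal.span B ∧ (r ≠ 0 → ∀ b ∈ B, ¬ m.degree b ≤ m.degree r) := by
  obtain ⟨q, r, h1, -, h3⟩ := m.div_set (B := B)
    (fun b hb => by rw [isUnit_iff_ne_zero, m.leadingCoeff_ne_zero_iff]; exact hB b hb) g
  refine ⟨r, ?_, fun hr b hb => h3 _ (m.degree_mem_support hr) b hb⟩
  rw [h1, add_sub_cancel_right, Finsupp.linearCombination_apply]
  refine Ideal.sum_mem _ fun b _ => ?_
  exact Ideal.mul_mem_left _ _ (Ideal.subset_span b.2)

lemma grob_reg {σ K : Type*} [Field K] (m : MonomialOrder σ) (B : Set (MvPolynomial σ K))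
    (hB : ∀ b ∈ B, b ≠ 0) (hG : ∀ h ∈ Ideal.span B, h ≠ 0 → ∃ b ∈ B, m.degree b ≤ m.degree h)
    (f : MvPolynomial σ K) (hf : f ≠ 0)
    (hd : ∀ b ∈ B, ∀ s, m.degree b s = 0 ∨ m.degree f s = 0) (g : MvPolynomial σ K)
    (hg : f * g ∈ Ideal.span B) : g ∈ Ideal.span B := by
  obtain ⟨r, h1, h2⟩ := grob_red m B hB g
  by_cases hr : r = 0
  · simpa [hr] using h1
  exfalso
  have h3 : f * r ∈ Ideal.span B := by
    have := sub_mem hg (Ideal.mul_mem_left _ f h1)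
    convert this using 1; ring
  obtain ⟨b, hb, hbd⟩ := hG _ h3 (mul_ne_zero hf hr)
  rw [m.degree_mul hf hr] at hbd
  exact h2 hr b hb (grob_cop hbd (hd b hb))

lemma grob_step {σ K : Type*} [Field K] (m : MonomialOrder σ) (B : Set (MvPolynomial σ K))
    (hB : ∀ b ∈ B, b ≠ 0) (hG : ∀ h ∈ Ideal.span B, h ≠ 0 → ∃ b ∈ B, m.degree b ≤ m.degree h)
    (f : MvPolynomial σ K) (hf : f ≠ 0)
    (hd : ∀ b ∈ B, ∀ s, m.degree b s = 0 ∨ m.degree f s = 0) :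
    ∀ h ∈ Ideal.span (insert f B), h ≠ 0 → ∃ b ∈ insert f B, m.degree b ≤ m.degree h := by
  intro h hh h0
  obtain ⟨a, z, hz, rfl⟩ := Ideal.mem_span_insert.1 hh
  obtain ⟨r, h1, h2⟩ := grob_red m B hB a
  have h3 : (a - r) * f + z ∈ Ideal.span B := add_mem (Ideal.mul_mem_right _ _ h1) hz
  have h4 : a * f + z = r * f + ((a - r) * f + z) := by ring
  rw [h4] at h0 ⊢
  generalize (a - r) * f + z = y at *
  by_cases hr : r = 0
  · simp only [hr, zero_mul, zero_add] at h0 ⊢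
    obtain ⟨b, hb, hbd⟩ := hG y h3 h0
    exact ⟨b, Set.mem_insert_of_mem _ hb, hbd⟩
  by_cases hy : y = 0
  · simp only [hy, add_zero]
    exact ⟨f, Set.mem_insert _ _, by rw [m.degree_mul hr hf]; exact le_add_self⟩
  obtain ⟨b, hb, hbd⟩ := hG y h3 hy
  have hne : m.degree (r * f) ≠ m.degree y := by
    intro he
    rw [← he, m.degree_mul hr hf, add_comm] at hbd
    exact h2 hr b hb (grob_cop hbd (hd b hb))
  rcases lt_or_gt_of_ne (fun e => hne (m.toSyn.injective e)) with hlt | hlt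
  · rw [m.degree_add_eq_right_of_lt hlt]
    exact ⟨b, Set.mem_insert_of_mem _ hb, hbd⟩
  · rw [m.degree_add_of_lt hlt]
    exact ⟨f, Set.mem_insert _ _, by rw [m.degree_mul hr hf]; exact le_add_self⟩

/-- coprime leading terms give a regular sequence -/
lemma reg_seq {σ K : Type*} [Field K] (m : MonomialOrder σ) (F : ℕ → MvPolynomial σ K) (N : ℕ)
    (h0 : ∀ i < N, F i ≠ 0)
    (hd : ∀ i < N, ∀ j < i, ∀ s, m.degree (F j) s = 0 ∨ m.degree (F i) s = 0) :
    ∀ i < N, ∀ g, F i * g ∈ Ideal.span (F '' Set.Iio i) → g ∈ Ideal.span (F '' Set.Iio i) := by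
  have key : ∀ i ≤ N, ∀ h ∈ Ideal.span (F '' Set.Iio i), h ≠ 0 →
      ∃ b ∈ F '' Set.Iio i, m.degree b ≤ m.degree h := by
    intro i
    induction i with
    | zero => intro _ h hh hne; simp at hh; exact absurd hh hne
    | succ i ih =>
      intro hi
      have : F '' Set.Iio (i + 1) = insert (F i) (F '' Set.Iio i) := by
        rw [← Set.image_insert_eq]; congr 1; ext; simp
      rw [this]
      apply grob_step m _ _ (ih (by omega)) _ (h0 i (by omega))
      · rintro _ ⟨j, hj, rfl⟩; exact hd i (by omega) j hj
      · rintro _ ⟨j, hj, rfl⟩; exact h0 j (by simp at hj; omega)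
  intro i hi
  apply grob_reg m _ _ (key i hi.le) _ (h0 i hi)
  · rintro _ ⟨j, hj, rfl⟩; exact hd i (by omega) j hj
  · rintro _ ⟨j, hj, rfl⟩; exact h0 j (by simp at hj; omega)

lemma smulreg_of {R : Type*} [CommRing R] (I : Ideal R) (x : R) (h : ∀ g, x * g ∈ I → g ∈ I) :
    IsSMulRegular (R ⧸ I) x := by
  rw [isSMulRegular_iff_right_eq_zero_of_smul]
  intro y hy
  obtain ⟨g, rfl⟩ := Ideal.Quotient.mk_surjective y
  rw [Ideal.Quotient.eq_zero_iff_mem]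
  apply h
  rw [← Ideal.Quotient.eq_zero_iff_mem, ← hy]
  rfl

lemma weak_reg {R : Type*} [CommRing R] (F : ℕ → R) (N : ℕ)
    (h : ∀ i < N, ∀ g, F i * g ∈ Ideal.span (F '' Set.Iio i) → g ∈ Ideal.span (F '' Set.Iio i)) :
    RingTheory.Sequence.IsWeaklyRegular R (List.ofFn fun i : Fin N => F i) := by
  constructor
  intro i hi
  have hi' : i < N := by simpa using hi
  have e : (Ideal.ofList (List.take i (List.ofFn fun i : Fin N => F i)) • (⊤ : Submodule R R))
      = Ideal.span (F '' Set.Iio i) := by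
    rw [smul_eq_mul, Ideal.mul_top, Ideal.ofList]
    congr 1
    ext x
    simp only [Set.mem_ofPred_eq, Set.mem_image, Set.mem_Iio, List.mem_take_iff_getElem]
    constructor
    · rintro ⟨j, hj, rfl⟩
      exact ⟨j, by omega, by simp⟩
    · rintro ⟨j, hj, rfl⟩
      exact ⟨j, by simp; omega, by simp⟩
  rw [e]
  simp only [List.getElem_ofFn]
  exact smulreg_of _ _ (h i hi')

lemma height_lem {R : Type*} [CommRing R] (F : ℕ → R) (N : ℕ)
    (h : ∀ i < N, ∀ g, F i * g ∈ Ideal.span (F '' Set.Iio i) → g ∈ Ideal.span (F '' Set.Iio i))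
    (P : PrimeSpectrum R) (hP : ∀ i < N, F i ∈ P.asIdeal) : (N : ℕ∞) ≤ Order.height P := by
  induction N generalizing P with
  | zero => simp
  | succ N ih =>
    obtain ⟨Q, hQ, hQP⟩ := Ideal.exists_minimalPrimes_le (I := Ideal.span (F '' Set.Iio N))
      (J := P.asIdeal) (by
        rw [Ideal.span_le]; rintro _ ⟨j, hj, rfl⟩; exact hP j (by simp at hj; omega))
    have hn : F N ∉ Q := by
      have := smulreg_of _ _ (h N (by omega))
      exact this.notMem_of_mem_minimalPrimes (by rwa [Ideal.annihilator_quotient])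
    let Q' : PrimeSpectrum R := ⟨Q, hQ.1.1⟩
    have hlt : Q' < P := by
      refine lt_of_le_of_ne hQP fun e => hn ?_
      have := hP N (by omega)
      rwa [← e] at this
    have := ih (fun i hi => h i (by omega)) Q'
      (fun i hi => hQ.1.2 (Ideal.subset_span ⟨i, hi, rfl⟩))
    push_cast
    calc (N : ℕ∞) + 1 ≤ Order.height Q' + 1 := by gcongr
      _ ≤ _ := Order.height_add_one_le hlt

lemma lex_det {S K : Type*} [Field K] [LinearOrder S] [WellFoundedGT S] (k : ℕ) (hk : 1 ≤ k)
    (pos : Fin k → Fin k → S)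
    (hpos : ∀ r c r' c', pos r c < pos r' c' ↔ r < r' ∨ (r = r' ∧ c < c')) :
    (MonomialOrder.lex (σ := S)).degree
      (Matrix.of fun r c : Fin k => (X (pos r c) : MvPolynomial S K)).det
      = ∑ r, Finsupp.single (pos r r) 1 := by
  classical
  set m := MonomialOrder.lex (σ := S) with hm
  have hinj : ∀ r c r' c', pos r c = pos r' c' → r = r' ∧ c = c' := by
    intro r c r' c' h
    have h1 := hpos r c r' c'
    have h2 := hpos r' c' r c
    simp only [h, lt_irrefl, false_iff] at h1 h2
    push Not at h1 h2
    have hr : r = r' := le_antisymm h2.1 h1.1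
    exact ⟨hr, le_antisymm (h2.2 hr.symm) (h1.2 hr)⟩
  let e : Equiv.Perm (Fin k) → (S →₀ ℕ) := fun τ => ∑ r, Finsupp.single (pos r (τ r)) 1
  have hlt : ∀ τ : Equiv.Perm (Fin k), τ ≠ 1 → m.toSyn (e τ) < m.toSyn (e 1) := by
    intro τ hτ
    have hex : ∃ r, τ r ≠ r := by
      by_contra! h
      exact hτ (Equiv.ext h)
    obtain ⟨r₀, hr₀, hmin⟩ : ∃ r₀, τ r₀ ≠ r₀ ∧ ∀ r < r₀, τ r = r := by
      let s := Finset.univ.filter fun r => τ r ≠ r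
      have hs : s.Nonempty := by obtain ⟨r, hr⟩ := hex; exact ⟨r, by simp [s, hr]⟩
      refine ⟨s.min' hs, by have := s.min'_mem hs; simpa [s] using this, fun r hr => ?_⟩
      by_contra h
      exact absurd (s.min'_le r (by simp [s, h])) (not_le.2 hr)
    have hgt : r₀ < τ r₀ := by
      refine lt_of_le_of_ne (not_lt.1 fun h => ?_) (Ne.symm hr₀)
      exact hr₀ (τ.injective (hmin _ h))
    rw [hm, MonomialOrder.lex_lt_iff, Finsupp.Lex.lt_iff]
    refine ⟨pos r₀ r₀, fun q hq => ?_, ?_⟩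
    · simp only [ofLex_toLex, e, Finsupp.finsetSum_apply]
      refine Finset.sum_congr rfl fun r _ => ?_
      rcases lt_trichotomy r r₀ with h | h | h
      · rw [hmin r h]; rfl
      · subst h
        have : pos r r < pos r (τ r) := (hpos _ _ _ _).2 (Or.inr ⟨rfl, hgt⟩)
        rw [Finsupp.single_eq_of_ne (hq.trans this).ne, Equiv.Perm.one_apply,
          Finsupp.single_eq_of_ne hq.ne]
      · have h1 : pos r₀ r₀ < pos r (τ r) := (hpos _ _ _ _).2 (Or.inl h)
        have h2 : pos r₀ r₀ < pos r r := (hpos _ _ _ _).2 (Or.inl h)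
        rw [Finsupp.single_eq_of_ne (hq.trans h1).ne, Equiv.Perm.one_apply,
          Finsupp.single_eq_of_ne (hq.trans h2).ne]
    · simp only [ofLex_toLex, e, Finsupp.finsetSum_apply]
      rw [Finset.sum_eq_zero]
      · refine lt_of_lt_of_le ?_ (Finset.single_le_sum (fun _ _ => Nat.zero_le _)
          (Finset.mem_univ r₀))
        simp
      · intro r _
        apply Finsupp.single_eq_of_ne
        intro h
        obtain ⟨h1, h2⟩ := hinj _ _ _ _ h
        subst h1
        exact hr₀ h2.symm
  have he1 : e 1 ≠ 0 := by
    intro h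
    have := DFunLike.congr_fun h (pos ⟨0, hk⟩ ⟨0, hk⟩)
    simp only [e, Finsupp.finsetSum_apply, Finsupp.coe_zero, Pi.zero_apply,
      Finset.sum_eq_zero_iff, Finset.mem_univ, true_imp_iff] at this
    simpa using this ⟨0, hk⟩
  have hdet : (Matrix.of fun r c : Fin k => (X (pos r c) : MvPolynomial S K)).det
      = ∑ τ : Equiv.Perm (Fin k), monomial (e τ) (((Equiv.Perm.sign τ : ℤ) : K)) := by
    rw [← Matrix.det_transpose, Matrix.det_apply']
    refine Finset.sum_congr rfl fun τ _ => ?_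
    have : ∏ i, (X (pos i (τ i)) : MvPolynomial S K) = monomial (e τ) 1 := by
      simp only [X, e, monomial_sum_one]
    simp only [Matrix.transpose_apply, Matrix.of_apply, this]
    rw [← map_intCast (C : K →+* MvPolynomial S K), C_mul_monomial, mul_one]
  have hd1 : m.degree (monomial (e 1) (1 : K)) = e 1 := by
    rw [m.degree_monomial, if_neg one_ne_zero]
  rw [hdet, ← Finset.add_sum_erase _ _ (Finset.mem_univ (1 : Equiv.Perm (Fin k)))]
  simp only [Equiv.Perm.sign_one, Units.val_one, Int.cast_one]
  rw [m.degree_add_of_lt, hd1]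
  · rfl
  · rw [hd1]
    refine lt_of_le_of_lt m.degree_sum_le ?_
    rw [Finset.sup_lt_iff]
    · intro τ hτ
      exact lt_of_le_of_lt (m.degree_monomial_le _) (hlt τ (Finset.ne_of_mem_erase hτ))
    · exact bot_lt_iff_ne_bot.2 (fun h => he1 ((m.toSyn_eq_zero_iff _).1 h))

lemma exists_order {K : Type*} [Field K] (n k : ℕ) (hk : 1 ≤ k) (hkn : k ≤ n) :
    ∃ m : MonomialOrder.{0, 0} (Fin n × Fin n), ∀ a : Fin k → Fin n, StrictMono a →
      m.degree (Matrix.of fun r c : Fin k =>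
        (X (a r, Fin.castLE hkn c) : MvPolynomial (Fin n × Fin n) K)).det
      = ∑ r, Finsupp.single (a r, Fin.castLE hkn r) 1 := by
  let lo : LinearOrder (Fin n × Fin n) :=
    LinearOrder.lift' (toLex : Fin n × Fin n → Lex (Fin n × Fin n)) toLex.injective
  have wf : @WellFoundedGT (Fin n × Fin n) lo.toLT :=
    @Finite.to_wellFoundedGT _ _ lo.toPreorder
  refine ⟨@MonomialOrder.lex _ lo wf, fun a ha => ?_⟩
  refine @lex_det (Fin n × Fin n) K _ lo wf k hk (fun r c => (a r, Fin.castLE hkn c)) ?_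
  intro r c r' c'
  change toLex (a r, Fin.castLE hkn c) < toLex (a r', Fin.castLE hkn c') ↔ _
  rw [Prod.Lex.toLex_lt_toLex]
  simp [ha.lt_iff_lt, ha.injective.eq_iff]

/-- Let `I k` be the ideal of `K[x i j]` generated by the `k×k` minors of the generic
`n×n` matrix with column set `{1, …, k}`.  The `n − k + 1` minors
`[i, i+1, …, i+k−1 | 1, …, k]` form a regular sequence, and the height of `I k` is at
least `n − k + 1`. -/
theorem height_Ik_ge_and_consecutive_minors_regular
    {K : Type*} [Field K] (n k : ℕ) (hk1 : 1 ≤ k) (hkn : k ≤ n)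
    (Xv : Fin n → Fin n → MvPolynomial (Fin n × Fin n) K)
    (hX : ∀ i j, Xv i j = MvPolynomial.X (i, j))
    (Ik : Ideal (MvPolynomial (Fin n × Fin n) K))
    (hIk : Ik = Ideal.span {p | ∃ a : Fin k → Fin n, StrictMono a ∧
      p = (Matrix.of fun r c : Fin k =>
        Xv (a r) ⟨c.val, lt_of_lt_of_le c.isLt hkn⟩).det}) :
    RingTheory.Sequence.IsWeaklyRegular (MvPolynomial (Fin n × Fin n) K)
      (List.ofFn fun i : Fin (n - k + 1) =>
        (Matrix.of fun r c : Fin k =>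
          Xv ⟨i.val + r.val, by omega⟩ ⟨c.val, lt_of_lt_of_le c.isLt hkn⟩).det) ∧
    ((n - k + 1 : ℕ) : ℕ∞) ≤ idealHeight Ik := by
  obtain ⟨m, hm⟩ := exists_order (K := K) n k hk1 hkn
  let a : ∀ i, i < n - k + 1 → Fin k → Fin n := fun i hi r => ⟨i + r.val, by omega⟩
  have ha : ∀ i hi, StrictMono (a i hi) := by
    intro i hi r s hrs
    simp only [a, Fin.mk_lt_mk]
    exact Nat.add_lt_add_left hrs i
  let F : ℕ → MvPolynomial (Fin n × Fin n) K := fun i =>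
    if hi : i < n - k + 1 then
      (Matrix.of fun r c : Fin k => Xv (a i hi r) ⟨c.val, lt_of_lt_of_le c.isLt hkn⟩).det
    else 0
  have hF : ∀ i (hi : i < n - k + 1), F i =
      (Matrix.of fun r c : Fin k => Xv (a i hi r) ⟨c.val, lt_of_lt_of_le c.isLt hkn⟩).det :=
    fun i hi => dif_pos hi
  have hdeg : ∀ i (hi : i < n - k + 1),
      m.degree (F i) = ∑ r, Finsupp.single (a i hi r, Fin.castLE hkn r) 1 := by
    intro i hi
    rw [hF i hi, ← hm _ (ha i hi)]
    simp only [hX]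
    rfl
  have hdz : ∀ i (hi : i < n - k + 1) s, m.degree (F i) s ≠ 0 → s.1.val = i + s.2.val := by
    intro i hi s hs
    rw [hdeg i hi, Finsupp.finsetSum_apply] at hs
    obtain ⟨r, -, hr⟩ := Finset.exists_ne_zero_of_sum_ne_zero hs
    have : s = (a i hi r, Fin.castLE hkn r) := by
      by_contra h
      exact hr (Finsupp.single_eq_of_ne h)
    rw [this]
    rfl
  have h0 : ∀ i < n - k + 1, F i ≠ 0 := by
    intro i hi
    apply m.ne_zero_of_degree_ne_zero
    rw [hdeg i hi]
    intro h
    have := DFunLike.congr_fun h (a i hi ⟨0, hk1⟩, Fin.castLE hkn ⟨0, hk1⟩)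
    simp only [Finsupp.finsetSum_apply, Finsupp.coe_zero, Pi.zero_apply,
      Finset.sum_eq_zero_iff, Finset.mem_univ, true_imp_iff] at this
    simpa using this ⟨0, hk1⟩
  have hreg := reg_seq m F (n - k + 1) h0 (by
    intro i hi j hj s
    by_contra! h
    have h1 := hdz j (by omega) s h.1
    have h2 := hdz i hi s h.2
    omega)
  constructor
  · have := weak_reg F _ hreg
    have e : (fun i : Fin (n - k + 1) => F i) = fun i : Fin (n - k + 1) =>
        (Matrix.of fun r c : Fin k =>
          Xv (a i i.2 r) ⟨c.val, lt_of_lt_of_le c.isLt hkn⟩).det := funext fun i => hF i i.2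
    rw [e] at this
    exact this
  · unfold idealHeight
    refine le_iInf₂ fun P hP => height_lem F _ hreg P fun i hi => hP ?_
    rw [hIk]
    exact Ideal.subset_span ⟨a i hi, ha i hi, hF i hi⟩
end

section
/- Let I be a homogeneous ideal in a graded polynomial ring R over a field, with minimal graded free resolutions F• of R/(I : f) and G• of R/I, and suppose φ•: F•(−d) → G• lifts multiplication by a homogeneous element f of degree d. If for all i the twisted degrees of F_{i−1}(−d) and G_i are distinct except in homological degree where cancellation occurs... [Specialized instance:] With R = K[x_{ij}, y_j : 1 ≤ i,j ≤ n], g_i = Σ_j x_{ij}y_j, and Δ = det X, the ideal ⟨g_1, ..., g_n, Δ⟩ has total Betti numbers β_0 = 1, β_i = C(n, i−1) + C(n, i) for 1 ≤ i ≤ n−1, and β_n = n. -/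
open MvPolynomial Matrix

/-- `β` is the sequence of total Betti numbers of `M`: there is a free resolution
`⋯ → R^(β 1) → R^(β 0) → M → 0` which is minimal in the sense that all differentials
have image inside `m` times the ambient free module (`m` the maximal/irrelevant ideal). -/
def IsMinimalFreeRes {R : Type*} [CommRing R] (m : Ideal R)
    (M : Type*) [AddCommGroup M] [Module R M] (β : ℕ → ℕ) : Prop :=
  ∃ (f : (i : ℕ) → ((Fin (β (i + 1)) → R) →ₗ[R] (Fin (β i) → R)))
    (ε : (Fin (β 0) → R) →ₗ[R] M),
      Function.Surjective ε ∧
      LinearMap.ker ε = LinearMap.range (f 0) ∧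
      (∀ i, LinearMap.ker (f i) = LinearMap.range (f (i + 1))) ∧
      (∀ i, LinearMap.range (f i) ≤ m • (⊤ : Submodule R (Fin (β i) → R)))

namespace Northcott

open TensorProduct

section general
variable {K R : Type*} [Field K] [CommRing R] [Algebra K R] {n : ℕ}

variable (K R n) in
/-- `R ⊗ Λ(K^n)`. -/
abbrev Lam := R ⊗[K] ExteriorAlgebra K (Fin n → K)

variable (K) in
/-- basis vector in the exterior algebra -/
noncomputable def bv (i : Fin n) : ExteriorAlgebra K (Fin n → K) :=
  ExteriorAlgebra.ι K (Pi.single i 1)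

/-- wedge by the `i`-th basis vector -/
noncomputable def ew (i : Fin n) : Lam K R n →ₗ[R] Lam K R n :=
  (LinearMap.mulLeft K (bv K i)).baseChange R

/-- contraction over `K` -/
noncomputable def gc (i : Fin n) :
    ExteriorAlgebra K (Fin n → K) →ₗ[K] ExteriorAlgebra K (Fin n → K) :=
  CliffordAlgebra.contractLeft (Q := (0 : QuadraticForm K (Fin n → K)))
    (LinearMap.proj i : (Fin n → K) →ₗ[K] K)

/-- contraction by the `i`-th coordinate -/
noncomputable def cw (i : Fin n) : Lam K R n →ₗ[R] Lam K R n :=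
  (gc (K := K) i).baseChange R

/-- coefficientwise operator -/
noncomputable def Tw (φ : R →ₗ[K] R) : Lam K R n →ₗ[K] Lam K R n :=
  φ.rTensor _

variable (K n) in
/-- graded pieces shifted by one -/
def Gr : ℕ → Submodule K (ExteriorAlgebra K (Fin n → K))
  | 0 => ⊥
  | (k + 1) => ⋀[K]^k (Fin n → K)

variable (K R n) in
/-- graded pieces shifted by one -/
noncomputable def Lk (k : ℕ) : Submodule R (Lam K R n) := (Gr K n k).baseChange R

/-- wedge by a vector -/
noncomputable def dw (v : Fin n → R) : Lam K R n →ₗ[R] Lam K R n := ∑ i, v i • ew i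

lemma dw_apply (v : Fin n → R) (a : Lam K R n) : dw v a = ∑ i, v i • ew i a := by
  simp [dw]

lemma gc_mul (i : Fin n) (v : Fin n → K) (x : ExteriorAlgebra K (Fin n → K)) :
    gc i (ExteriorAlgebra.ι K v * x) = v i • x - ExteriorAlgebra.ι K v * gc i x := by
  exact CliffordAlgebra.contractLeft_ι_mul _ _ _

lemma ew_tmul (i : Fin n) (r : R) (x) :
    ew i (r ⊗ₜ[K] x : Lam K R n) = r ⊗ₜ (bv K i * x) := rfl
lemma cw_tmul (i : Fin n) (r : R) (x) :
    cw i (r ⊗ₜ[K] x : Lam K R n) = r ⊗ₜ (gc i x) := rfl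
lemma Tw_tmul (φ : R →ₗ[K] R) (r : R) (x) :
    Tw φ (r ⊗ₜ[K] x : Lam K R n) = φ r ⊗ₜ x := rfl

lemma ew_ew_self (i : Fin n) (a : Lam K R n) : ew i (ew i a) = 0 := by
  induction a using TensorProduct.induction_on with
  | zero => simp
  | add x y hx hy => simp [hx, hy]
  | tmul r x =>
    rw [ew_tmul, ew_tmul, ← mul_assoc, bv, ExteriorAlgebra.ι_sq_zero, zero_mul, tmul_zero]

lemma ew_anti (i j : Fin n) (a : Lam K R n) : ew i (ew j a) = - ew j (ew i a) := by
  induction a using TensorProduct.induction_on with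
  | zero => simp
  | add x y hx hy => simp [hx, hy]; abel
  | tmul r x =>
    rw [ew_tmul, ew_tmul, ew_tmul, ew_tmul, ← mul_assoc, ← mul_assoc, ← tmul_neg, ← neg_mul]
    congr 2
    exact eq_neg_of_add_eq_zero_left (ExteriorAlgebra.ι_add_mul_swap _ _)

lemma cw_ew (i j : Fin n) (a : Lam K R n) :
    cw i (ew j a) = (if i = j then a else 0) - ew j (cw i a) := by
  induction a using TensorProduct.induction_on with
  | zero => simp
  | add x y hx hy =>
    rw [map_add, map_add, hx, hy, map_add, map_add]
    split_ifs <;> abel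
  | tmul r x =>
    rw [ew_tmul, cw_tmul, cw_tmul, ew_tmul, bv, gc_mul, tmul_sub]
    congr 1
    by_cases h : i = j
    · subst h; simp
    · simp [h]

lemma ew_Tw (i : Fin n) (φ : R →ₗ[K] R) (a : Lam K R n) : ew i (Tw φ a) = Tw φ (ew i a) := by
  induction a using TensorProduct.induction_on with
  | zero => simp
  | add x y hx hy => simp [hx, hy]
  | tmul r x => rfl

lemma cw_Tw (i : Fin n) (φ : R →ₗ[K] R) (a : Lam K R n) : cw i (Tw φ a) = Tw φ (cw i a) := by
  induction a using TensorProduct.induction_on with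
  | zero => simp
  | add x y hx hy => simp [hx, hy]
  | tmul r x => rfl

lemma Tw_smul (φ : R →ₗ[K] R) (r : R) (a : Lam K R n) :
    Tw φ (r • a) = Tw (φ ∘ₗ LinearMap.mulLeft K r) a := by
  induction a using TensorProduct.induction_on with
  | zero => simp
  | add x y hx hy => simp only [smul_add, map_add, hx, hy]
  | tmul s x => rfl

lemma smul_Tw (φ : R →ₗ[K] R) (r : R) (a : Lam K R n) :
    r • Tw φ a = Tw (LinearMap.mulLeft K r ∘ₗ φ) a := by
  induction a using TensorProduct.induction_on with
  | zero => simp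
  | add x y hx hy => simp only [smul_add, map_add, hx, hy]
  | tmul s x => rfl

lemma Tw_Tw (φ ψ : R →ₗ[K] R) (a : Lam K R n) : Tw φ (Tw ψ a) = Tw (φ ∘ₗ ψ) a := by
  induction a using TensorProduct.induction_on with
  | zero => simp
  | add x y hx hy => simp only [map_add, hx, hy]
  | tmul s x => rfl

lemma Tw_id (a : Lam K R n) : Tw LinearMap.id a = a := by
  simp [Tw]

lemma Tw_zero (a : Lam K R n) : Tw 0 a = 0 := by
  simp [Tw]

lemma Tw_comm (φ : R →ₗ[K] R) (r : R) (h : ∀ f, φ (r * f) = r * φ f) (a : Lam K R n) :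
    Tw φ (r • a) = r • Tw φ a := by
  rw [Tw_smul, smul_Tw]
  congr 2
  exact LinearMap.ext h

lemma Tw_cancel (φ : R →ₗ[K] R) (r : R) (h : ∀ f, φ (r * f) = f) (a : Lam K R n) :
    Tw φ (r • a) = a := by
  rw [Tw_smul]
  have : φ ∘ₗ LinearMap.mulLeft K r = LinearMap.id := LinearMap.ext h
  rw [this, Tw_id]

lemma Lk_induction {k : ℕ} {P : Lam K R n → Prop} (h0 : P 0)
    (hadd : ∀ a b, P a → P b → P (a + b))
    (ht : ∀ (r : R), ∀ x ∈ Gr K n k, P (r ⊗ₜ x)) {a : Lam K R n} (ha : a ∈ Lk K R n k) : P a := by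
  change a ∈ LinearMap.range ((Gr K n k).subtype.baseChange R) at ha
  obtain ⟨z, rfl⟩ := ha
  induction z using TensorProduct.induction_on with
  | zero => simpa using h0
  | add x y hx hy => rw [map_add]; exact hadd _ _ hx hy
  | tmul r x => exact ht r _ x.2

lemma tmul_mem_Lk {k : ℕ} (r : R) {x} (hx : x ∈ Gr K n k) : r ⊗ₜ[K] x ∈ Lk K R n k :=
  Submodule.tmul_mem_baseChange_of_mem r hx

lemma Lk_zero {a : Lam K R n} (ha : a ∈ Lk K R n 0) : a = 0 := by
  refine Lk_induction (P := fun a => a = 0) rfl ?_ ?_ ha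
  · rintro _ _ rfl rfl; simp
  · intro r x hx
    rw [Gr, Submodule.mem_bot] at hx
    simp [hx]

lemma Gr_ew {k : ℕ} (v : Fin n → K) {x} (hx : x ∈ Gr K n k) :
    ExteriorAlgebra.ι K v * x ∈ Gr K n (k + 1) := by
  cases k with
  | zero =>
    rw [Gr, Submodule.mem_bot] at hx
    simp [hx]
  | succ k =>
    show _ ∈ LinearMap.range _ ^ (k + 1)
    rw [pow_succ']
    exact Submodule.mul_mem_mul ⟨v, rfl⟩ hx

lemma Gr_gc {k : ℕ} (i : Fin n) {x} (hx : x ∈ Gr K n (k + 1)) :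
    gc i x ∈ Gr K n k := by
  induction k generalizing x with
  | zero =>
    have : x ∈ (1 : Submodule K (ExteriorAlgebra K (Fin n → K))) := by
      simpa [Gr] using hx
    obtain ⟨r, rfl⟩ := Submodule.mem_one.mp this
    rw [Gr, Submodule.mem_bot]
    exact CliffordAlgebra.contractLeft_algebraMap _ _ _
  | succ k ih =>
    have : x ∈ LinearMap.range (ExteriorAlgebra.ι K (M := Fin n → K)) * Gr K n (k + 1) := by
      have : x ∈ LinearMap.range (ExteriorAlgebra.ι K (M := Fin n → K)) ^ (k + 1) := hx
      rwa [pow_succ'] at this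
    refine Submodule.mul_induction_on this ?_ ?_
    · rintro _ ⟨v, rfl⟩ y hy
      rw [gc_mul]
      exact Submodule.sub_mem _ (Submodule.smul_mem _ _ hy) (Gr_ew v (ih hy))
    · intro x y hx hy
      rw [map_add]
      exact Submodule.add_mem _ hx hy

lemma ew_mem {k : ℕ} (i : Fin n) {a : Lam K R n} (ha : a ∈ Lk K R n k) :
    ew i a ∈ Lk K R n (k + 1) := by
  refine Lk_induction (P := fun a => ew i a ∈ Lk K R n (k + 1)) (by simp) ?_ ?_ ha
  · intro a b ha hb; rw [map_add]; exact Submodule.add_mem _ ha hb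
  · intro r x hx; exact tmul_mem_Lk r (Gr_ew _ hx)

lemma cw_mem {k : ℕ} (i : Fin n) {a : Lam K R n} (ha : a ∈ Lk K R n (k + 1)) :
    cw i a ∈ Lk K R n k := by
  refine Lk_induction (P := fun a => cw i a ∈ Lk K R n k) (by simp) ?_ ?_ ha
  · intro a b ha hb; rw [map_add]; exact Submodule.add_mem _ ha hb
  · intro r x hx; exact tmul_mem_Lk r (Gr_gc _ hx)

lemma Tw_mem {k : ℕ} (φ : R →ₗ[K] R) {a : Lam K R n} (ha : a ∈ Lk K R n k) :
    Tw φ a ∈ Lk K R n k := by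
  refine Lk_induction (P := fun a => Tw φ a ∈ Lk K R n k) (by simp) ?_ ?_ ha
  · intro a b ha hb; rw [map_add]; exact Submodule.add_mem _ ha hb
  · intro r x hx; exact tmul_mem_Lk _ hx

lemma dw_mem {k : ℕ} (v : Fin n → R) {a : Lam K R n} (ha : a ∈ Lk K R n k) :
    dw v a ∈ Lk K R n (k + 1) := by
  rw [dw_apply]
  exact Submodule.sum_mem _ fun i _ => Submodule.smul_mem _ _ (ew_mem i ha)

lemma ew_dw (v : Fin n → R) (i : Fin n) (a : Lam K R n) : ew i (dw v a) = - dw v (ew i a) := by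
  rw [dw_apply, dw_apply, map_sum, ← Finset.sum_neg_distrib]
  refine Finset.sum_congr rfl fun j _ => ?_
  rw [map_smul, ew_anti, smul_neg]

lemma cw_dw (v : Fin n → R) (i : Fin n) (a : Lam K R n) :
    cw i (dw v a) = v i • a - dw v (cw i a) := by
  rw [dw_apply, dw_apply, map_sum]
  simp only [map_smul, cw_ew, smul_sub, Finset.sum_sub_distrib]
  simp

/-- the degree one element attached to a vector -/
noncomputable def wv (v : Fin n → R) : Lam K R n := ∑ i, v i • (1 ⊗ₜ bv K i)

lemma ew_eq (i : Fin n) (a : Lam K R n) : ew i a = (1 ⊗ₜ bv K i) * a := by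
  induction a using TensorProduct.induction_on with
  | zero => simp
  | add x y hx hy => simp [hx, hy, mul_add]
  | tmul r x => rw [ew_tmul, Algebra.TensorProduct.tmul_mul_tmul, one_mul]

lemma dw_eq (v : Fin n → R) (a : Lam K R n) : dw v a = wv v * a := by
  rw [dw_apply, wv, Finset.sum_mul]
  simp only [ew_eq, smul_mul_assoc]

lemma wv_sq (v : Fin n → R) : (wv v : Lam K R n) * wv v = 0 := by
  suffices H : ∀ S : Finset (Fin n), (∑ i ∈ S, v i • ((1 : R) ⊗ₜ[K] bv K i)) *
      (∑ i ∈ S, v i • ((1 : R) ⊗ₜ[K] bv K i)) = 0 from H Finset.univ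
  intro S
  induction S using Finset.induction_on with
  | empty => simp
  | insert i S hi ih =>
    rw [Finset.sum_insert hi, add_mul, mul_add, mul_add, ih, add_zero]
    have h1 : (v i • ((1 : R) ⊗ₜ[K] bv K i)) * (v i • ((1 : R) ⊗ₜ[K] bv K i)) = 0 := by
      rw [smul_mul_smul_comm, Algebra.TensorProduct.tmul_mul_tmul, bv,
        ExteriorAlgebra.ι_sq_zero, tmul_zero, smul_zero]
    rw [h1, zero_add, Finset.mul_sum, Finset.sum_mul, ← Finset.sum_add_distrib]
    refine Finset.sum_eq_zero fun j _ => ?_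
    rw [smul_mul_smul_comm, smul_mul_smul_comm, Algebra.TensorProduct.tmul_mul_tmul,
      Algebra.TensorProduct.tmul_mul_tmul, mul_comm (v j), ← smul_add, ← tmul_add, bv, bv,
      ExteriorAlgebra.ι_add_mul_swap, tmul_zero, smul_zero]

lemma dw_dw (v : Fin n → R) (a : Lam K R n) : dw v (dw v a) = 0 := by
  rw [dw_eq, dw_eq, ← mul_assoc, wv_sq, zero_mul]

lemma eq_zero_of_ew {k : ℕ} {a : Lam K R n} (ha : a ∈ Lk K R n k) (S : Finset (Fin n))
    (hS : k ≤ S.card) (h : ∀ i ∈ S, ew i a = 0) : a = 0 := by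
  induction k generalizing a S with
  | zero => exact Lk_zero ha
  | succ k ih =>
    obtain ⟨i, hi⟩ : S.Nonempty := by rw [← Finset.card_pos]; omega
    have h1 := cw_ew i i a
    rw [h i hi, map_zero, if_pos rfl] at h1
    have h2 : cw i a = 0 := by
      refine ih (cw_mem i ha) (S.erase i) ?_ ?_
      · rw [Finset.card_erase_of_mem hi]; omega
      · intro j hj
        have h3 := cw_ew i j a
        rw [h j (Finset.mem_of_mem_erase hj), if_neg (Finset.ne_of_mem_erase hj).symm] at h3
        simpa using h3.symm
    rw [h2, map_zero, sub_zero] at h1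
    exact h1.symm

/-- Koszul exactness from division operators. -/
lemma koszul_of_div (v : Fin n → R) (φ : Fin n → R →ₗ[K] R)
    (h1 : ∀ i f, φ i (v i * f) = f) (h2 : ∀ i j, i ≠ j → ∀ f, φ i (v j * f) = v j * φ i f)
    {k : ℕ} (hk : k ≤ n) {a : Lam K R n} (ha : a ∈ Lk K R n (k)) (hd : dw v a = 0) :
    ∃ b ∈ Lk K R n (k - 1), dw v b = a := by
  cases k with
  | zero => exact ⟨0, by simp, by simp [Lk_zero ha]⟩
  | succ k =>
  suffices H : ∀ S : Finset (Fin n), ∃ b ∈ Lk K R n k, ∀ i ∈ S, ew i (a - dw v b) = 0 by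
    obtain ⟨b, hb, hb'⟩ := H Finset.univ
    refine ⟨b, hb, ?_⟩
    have := eq_zero_of_ew (Submodule.sub_mem _ ha (dw_mem v hb)) Finset.univ (by simpa using hk) hb'
    exact (sub_eq_zero.mp this).symm
  intro S
  induction S using Finset.induction_on with
  | empty => exact ⟨0, Submodule.zero_mem _, by simp⟩
  | insert i S hi ih =>
    obtain ⟨b, hb, hb'⟩ := ih
    obtain ⟨a', ha'⟩ : ∃ a', a' = a - dw v b := ⟨_, rfl⟩
    rw [← ha'] at hb'
    have hda : dw v a' = 0 := by rw [ha', map_sub, hd, dw_dw, sub_zero]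
    have ham : a' ∈ Lk K R n (k + 1) := ha' ▸ Submodule.sub_mem _ ha (dw_mem v hb)
    have key : a' - dw v (Tw (φ i) (cw i a')) = ew i (cw i a' - v i • Tw (φ i) (cw i a')) := by
      have e1 : Tw (φ i) (v i • a') = a' := by
        exact Tw_cancel _ _ (h1 i) _
      have e2 := cw_dw v i a'
      rw [hda, map_zero] at e2
      have e3 : Tw (φ i) (dw v (cw i a')) = a' := by
        rw [← sub_eq_zero.mp e2.symm, e1]
      have e4 : Tw (φ i) (dw v (cw i a')) - dw v (Tw (φ i) (cw i a'))
          = ew i (cw i a' - v i • Tw (φ i) (cw i a')) := by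
        rw [dw_apply, dw_apply, map_sum, ← Finset.sum_sub_distrib,
          Finset.sum_eq_single i]
        · rw [LinearMap.map_sub, LinearMap.map_smul]
          congr 1
          exact Tw_cancel _ _ (h1 i) _
        · intro j _ hj
          rw [Tw_comm _ _ (h2 i j hj.symm), ew_Tw, sub_self]
        · simp
      rw [← e4, e3]
    refine ⟨b + Tw (φ i) (cw i a'), Submodule.add_mem _ hb (Tw_mem _ (cw_mem i ham)), ?_⟩
    have e5 : a - dw v (b + Tw (φ i) (cw i a')) = ew i (cw i a' - v i • Tw (φ i) (cw i a')) := by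
      rw [← key, map_add, ha']; abel
    rw [e5]
    intro j hj
    rcases Finset.mem_insert.mp hj with rfl | hj
    · exact ew_ew_self _ _
    · have hij : i ≠ j := fun h => hi (h ▸ hj)
      have h3 := cw_ew i j a'
      rw [hb' j hj, if_neg hij] at h3
      have h4 : ew j (cw i a') = 0 := by simpa using h3.symm
      rw [ew_anti, map_sub, map_smul, ew_Tw, h4]
      simp


lemma Tw_sum {ι : Type*} (s : Finset ι) (φ : ι → R →ₗ[K] R) (a : Lam K R n) :
    Tw (∑ i ∈ s, φ i) a = ∑ i ∈ s, Tw (φ i) a := by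
  simp only [Tw, ← LinearMap.coe_rTensorHom, map_sum, LinearMap.sum_apply]

lemma koszul_weight (u w : Fin n → R) (c : ℕ → R →ₗ[K] R)
    (hu : ∀ e i f, c (e + 1) (u i * f) = u i * c e f) (hu0 : ∀ i f, c 0 (u i * f) = 0)
    (hw : ∀ e i f, c e (w i * f) = w i * c e f)
    (hc : ∀ e f, c e (c e f) = c e f) (hc' : ∀ e e' f, e ≠ e' → c e (c e' f) = 0)
    (hs : ∀ f, ∃ N, ∀ M, N ≤ M → ∑ e ∈ Finset.range M, c e f = f)
    (hex : ∀ {k : ℕ}, k ≤ n → ∀ {a : Lam K R n}, a ∈ Lk K R n k → dw u a = 0 →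
      ∃ b ∈ Lk K R n (k - 1), dw u b = a)
    {k : ℕ} (hk : k ≤ n) {a : Lam K R n} (ha : a ∈ Lk K R n k)
    (hd : dw (u + w) a = 0) : ∃ b ∈ Lk K R n (k - 1), dw (u + w) b = a := by
  have dadd : ∀ x : Lam K R n, dw (u + w) x = dw u x + dw w x := by
    intro x; simp [dw_apply, add_smul, Finset.sum_add_distrib]
  have Tu : ∀ e (x : Lam K R n), Tw (c (e + 1)) (dw u x) = dw u (Tw (c e) x) := by
    intro e x
    rw [dw_apply, dw_apply, map_sum]
    refine Finset.sum_congr rfl fun i _ => ?_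
    rw [Tw_smul, ew_Tw, smul_Tw]
    congr 2
    exact LinearMap.ext (hu e i)
  have Tu0 : ∀ (x : Lam K R n), Tw (c 0) (dw u x) = 0 := by
    intro x
    rw [dw_apply, map_sum]
    refine Finset.sum_eq_zero fun i _ => ?_
    rw [Tw_smul]
    have : c 0 ∘ₗ LinearMap.mulLeft K (u i) = 0 := LinearMap.ext (hu0 i)
    rw [this, Tw_zero]
  have Tww : ∀ e (x : Lam K R n), Tw (c e) (dw w x) = dw w (Tw (c e) x) := by
    intro e x
    rw [dw_apply, dw_apply, map_sum]
    refine Finset.sum_congr rfl fun i _ => ?_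
    rw [Tw_comm _ _ (hw e i), ew_Tw]
  have TT : ∀ e (x : Lam K R n), Tw (c e) (Tw (c e) x) = Tw (c e) x := by
    intro e x
    rw [Tw_Tw]; congr 2; exact LinearMap.ext (hc e)
  have TT' : ∀ e e' (x : Lam K R n), e ≠ e' → Tw (c e) (Tw (c e') x) = 0 := by
    intro e e' x h
    rw [Tw_Tw]
    have : c e ∘ₗ c e' = 0 := LinearMap.ext fun f => hc' e e' f h
    rw [this, Tw_zero]
  have Ts : ∀ x : Lam K R n, ∃ N, ∀ M, N ≤ M → ∑ e ∈ Finset.range M, Tw (c e) x = x := by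
    intro x
    induction x using TensorProduct.induction_on with
    | zero => exact ⟨0, by simp⟩
    | add x y hx hy =>
      obtain ⟨N, hN⟩ := hx
      obtain ⟨N', hN'⟩ := hy
      refine ⟨max N N', fun M hM => ?_⟩
      simp only [map_add, Finset.sum_add_distrib]
      rw [hN M (by omega), hN' M (by omega)]
    | tmul r x =>
      obtain ⟨N, hN⟩ := hs r
      refine ⟨N, fun M hM => ?_⟩
      simp only [Tw_tmul]
      rw [← sum_tmul, hN M hM]
  have T0 : ∀ x : Lam K R n, (∀ e, Tw (c e) x = 0) → x = 0 := by
    intro x hx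
    obtain ⟨N, hN⟩ := Ts x
    rw [← hN N le_rfl]
    exact Finset.sum_eq_zero fun e _ => hx e
  have Tbig : ∃ D, ∀ e, D ≤ e → Tw (c e) a = 0 := by
    obtain ⟨N, hN⟩ := Ts a
    refine ⟨N, fun e he => ?_⟩
    have h1 := hN (e + 1) (by omega)
    rw [Finset.sum_range_succ, hN e he] at h1
    simpa using h1
  obtain ⟨D, hD⟩ := Tbig
  induction D generalizing a with
  | zero => exact ⟨0, by simp, by rw [map_zero, T0 a fun e => hD e (by omega)]⟩
  | succ D ih =>
    have h1 : dw u (Tw (c D) a) = 0 := by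
      rw [← Tu]
      have h2 : Tw (c (D + 1)) (dw (u + w) a) = 0 := by rw [hd, map_zero]
      rwa [dadd, map_add, Tww, hD (D + 1) le_rfl, map_zero, add_zero] at h2
    obtain ⟨b, hb, hb'⟩ := hex hk (Tw_mem (c D) ha) h1
    cases D with
    | zero =>
      refine ih ha hd fun e _ => ?_
      by_cases he : e = 0
      · subst he
        rw [← TT, ← hb', Tu0]
      · exact hD e (by omega)
    | succ D =>
      have hb2 : dw u (Tw (c D) b) = Tw (c (D + 1)) a := by
        rw [← Tu, hb', TT]
      have hm : Tw (c D) b ∈ Lk K R n (k - 1) := Tw_mem _ hb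
      have hm' : dw (u + w) (Tw (c D) b) ∈ Lk K R n k := by
        cases k with
        | zero => rw [Lk_zero hm]; simp
        | succ k => exact dw_mem _ hm
      obtain ⟨b', hb1, hb2⟩ := ih (Submodule.sub_mem _ ha hm')
        (by rw [map_sub, hd, dw_dw, sub_zero]) (by
          intro e he
          rw [map_sub, dadd, map_add, hb2, Tww, TT' e D _ (by omega), map_zero, add_zero]
          by_cases h : e = D + 1
          · subst h; rw [TT, sub_self]
          · rw [TT' _ _ _ h, hD e (by omega), sub_zero])
      refine ⟨b' + Tw (c D) b, Submodule.add_mem _ hb1 hm, ?_⟩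
      rw [map_add, hb2]; abel

/-- `wv` as a linear map -/
noncomputable def wvl : (Fin n → R) →ₗ[R] Lam K R n where
  toFun := wv
  map_add' v w := by simp [wv, add_smul, Finset.sum_add_distrib]
  map_smul' r v := by simp [wv, mul_smul, Finset.smul_sum]

/-- from the exterior algebra over `R` -/
noncomputable def gam : ExteriorAlgebra R (Fin n → R) →ₐ[R] Lam K R n :=
  ExteriorAlgebra.lift R ⟨wvl, wv_sq⟩

lemma gam_ι (v : Fin n → R) : (gam (ExteriorAlgebra.ι R v) : Lam K R n) = wv v :=
  ExteriorAlgebra.lift_ι_apply _ _ _ _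

/-- the `K`-part of `Phi` -/
noncomputable def PhiK (A : Matrix (Fin n) (Fin n) R) :
    ExteriorAlgebra K (Fin n → K) →ₐ[K] Lam K R n :=
  ExteriorAlgebra.lift K ⟨((wvl ∘ₗ A.mulVecLin).restrictScalars K) ∘ₗ
    ((Algebra.linearMap K R).compLeft (Fin n)), fun _ => wv_sq _⟩

/-- exterior power of a matrix -/
noncomputable def Phi (A : Matrix (Fin n) (Fin n) R) : Lam K R n →ₐ[R] Lam K R n :=
  Algebra.TensorProduct.lift (Algebra.ofId R (Lam K R n)) (PhiK A)
    (fun x y => Algebra.commutes x _)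

lemma PhiK_ι (A : Matrix (Fin n) (Fin n) R) (v : Fin n → K) :
    PhiK A (ExteriorAlgebra.ι K v) = wv (A *ᵥ (algebraMap K R ∘ v)) :=
  ExteriorAlgebra.lift_ι_apply _ _ _ _

lemma Phi_tmul (A : Matrix (Fin n) (Fin n) R) (r : R) (x : ExteriorAlgebra K (Fin n → K)) :
    Phi A (r ⊗ₜ x) = r • PhiK A x := by
  refine (Algebra.TensorProduct.lift_tmul _ _ _ _ _).trans ?_
  rw [Algebra.ofId_apply, Algebra.smul_def]

lemma Phi_wv (A : Matrix (Fin n) (Fin n) R) (v : Fin n → R) :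
    (Phi A (wv v) : Lam K R n) = wv (A *ᵥ v) := by
  have h : ((Phi A).toLinearMap ∘ₗ wvl : (Fin n → R) →ₗ[R] Lam K R n)
      = wvl ∘ₗ A.mulVecLin := by
    refine (Pi.basisFun R (Fin n)).ext fun i => ?_
    have h1 : (wvl ((Pi.basisFun R (Fin n)) i) : Lam K R n) = 1 ⊗ₜ bv K i := by
      show (wv _ : Lam K R n) = _
      rw [wv, Finset.sum_eq_single i]
      · simp
      · intro j _ hj; simp [hj]
      · simp
    rw [LinearMap.comp_apply, h1]
    show Phi A (1 ⊗ₜ bv K i) = _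
    rw [Phi_tmul, bv, PhiK_ι, one_smul]
    show wv _ = wv (A *ᵥ _)
    congr 2
    ext j
    by_cases hj : j = i
    · subst hj; simp
    · simp [hj]
  exact LinearMap.congr_fun h v

lemma Phi_dw (A : Matrix (Fin n) (Fin n) R) (v : Fin n → R) (a : Lam K R n) :
    Phi A (dw v a) = dw (A *ᵥ v) (Phi A a) := by
  rw [dw_eq, dw_eq, map_mul, Phi_wv]

lemma PhiK_mem (A : Matrix (Fin n) (Fin n) R) {k : ℕ} {x : ExteriorAlgebra K (Fin n → K)}
    (hx : x ∈ Gr K n k) : PhiK A x ∈ Lk K R n k := by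
  induction k generalizing x with
  | zero =>
    rw [Gr, Submodule.mem_bot] at hx
    simp [hx]
  | succ k ih =>
    cases k with
    | zero =>
      have : x ∈ (1 : Submodule K (ExteriorAlgebra K (Fin n → K))) := by
        simpa [Gr] using hx
      obtain ⟨r, rfl⟩ := Submodule.mem_one.mp this
      rw [AlgHom.commutes, Algebra.TensorProduct.algebraMap_apply]
      refine tmul_mem_Lk _ ?_
      simp [Gr]
    | succ k =>
      have : x ∈ LinearMap.range (ExteriorAlgebra.ι K (M := Fin n → K)) * Gr K n (k + 1) := by
        have : x ∈ LinearMap.range (ExteriorAlgebra.ι K (M := Fin n → K)) ^ (k + 1) := hx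
        rwa [pow_succ'] at this
      refine Submodule.mul_induction_on this ?_ ?_
      · rintro _ ⟨v, rfl⟩ y hy
        rw [map_mul, PhiK_ι, ← dw_eq]
        exact dw_mem _ (ih hy)
      · intro x y hx hy
        rw [map_add]
        exact Submodule.add_mem _ hx hy

lemma Phi_mem (A : Matrix (Fin n) (Fin n) R) {k : ℕ} {a : Lam K R n}
    (ha : a ∈ Lk K R n k) : Phi A a ∈ Lk K R n k := by
  refine Lk_induction (P := fun a => Phi A a ∈ Lk K R n k) (by simp) ?_ ?_ ha
  · intro a b ha hb; rw [map_add]; exact Submodule.add_mem _ ha hb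
  · intro r x hx; rw [Phi_tmul]; exact Submodule.smul_mem _ _ (PhiK_mem A hx)

lemma dw_mem_smul {m : Ideal R} {k : ℕ} {v : Fin n → R} (hv : ∀ i, v i ∈ m) {a : Lam K R n}
    (ha : a ∈ Lk K R n k) : dw v a ∈ m • Lk K R n (k + 1) := by
  rw [dw_apply]
  exact Submodule.sum_mem _ fun i _ => Submodule.smul_mem_smul (hv i) (ew_mem i ha)

lemma Phi_mem_smul {m : Ideal R} (A : Matrix (Fin n) (Fin n) R) (hA : ∀ i j, A i j ∈ m) {k : ℕ}
    {a : Lam K R n} (ha : a ∈ Lk K R n (k + 2)) : Phi A a ∈ m • Lk K R n (k + 2) := by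
  refine Lk_induction (P := fun a => Phi A a ∈ m • Lk K R n (k + 2)) (by simp) ?_ ?_ ha
  · intro a b ha hb; rw [map_add]; exact Submodule.add_mem _ ha hb
  · intro r x hx; rw [Phi_tmul]; refine Submodule.smul_mem _ _ ?_
    have : x ∈ LinearMap.range (ExteriorAlgebra.ι K (M := Fin n → K)) * Gr K n (k + 1) := by
      have : x ∈ LinearMap.range (ExteriorAlgebra.ι K (M := Fin n → K)) ^ (k + 1) := hx
      rwa [pow_succ'] at this
    refine Submodule.mul_induction_on this ?_ ?_
    · rintro _ ⟨v, rfl⟩ y hy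
      rw [map_mul, PhiK_ι, ← dw_eq]
      refine dw_mem_smul (fun i => ?_) (PhiK_mem A hy)
      rw [Matrix.mulVec, dotProduct]
      exact Ideal.sum_mem _ fun j _ => Ideal.mul_mem_right _ _ (hA i j)
    · intro x y hx hy
      rw [map_add]
      exact Submodule.add_mem _ hx hy

lemma Phi_one (A : Matrix (Fin n) (Fin n) R) {a : Lam K R n} (ha : a ∈ Lk K R n 1) :
    Phi A a = a := by
  refine Lk_induction (P := fun a => Phi A a = a) (by simp) ?_ ?_ ha
  · intro a b ha hb; rw [map_add, ha, hb]
  · intro r x hx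
    have : x ∈ (1 : Submodule K (ExteriorAlgebra K (Fin n → K))) := by
      simpa [Gr] using hx
    obtain ⟨s, rfl⟩ := Submodule.mem_one.mp this
    rw [Phi_tmul, AlgHom.commutes, Algebra.algebraMap_eq_smul_one, Algebra.algebraMap_eq_smul_one,
      smul_comm, tmul_smul, Algebra.TensorProduct.one_def, smul_tmul', smul_eq_mul, mul_one]

lemma gam_comp (v : Fin n → Fin n → K) : gam (ExteriorAlgebra.ιMulti R n
      (fun i => algebraMap K R ∘ v i)) = (1 : R) ⊗ₜ[K] ExteriorAlgebra.ιMulti K n v := by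
  have h : ∀ w : Fin n → K, (wv (algebraMap K R ∘ w) : Lam K R n) =
      Algebra.TensorProduct.includeRight (ExteriorAlgebra.ι K w) := by
    intro w
    conv_rhs => rw [pi_eq_sum_univ' w]
    simp only [wv, map_sum, map_smul, bv]
    refine Finset.sum_congr rfl fun i _ => ?_
    rw [Function.comp_apply, algebraMap_smul]
    congr 1
  have h2 : (1 : R) ⊗ₜ[K] ExteriorAlgebra.ιMulti K n v =
    Algebra.TensorProduct.includeRight (ExteriorAlgebra.ιMulti K n v) := rfl
  rw [h2, ExteriorAlgebra.ιMulti_apply, ExteriorAlgebra.ιMulti_apply, map_list_prod,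
    map_list_prod, List.map_ofFn, List.map_ofFn]
  congr 2
  ext i : 1
  rw [Function.comp_apply, Function.comp_apply, ← h]
  exact ExteriorAlgebra.lift_ι_apply _ _ _ _

lemma Phi_gam (A : Matrix (Fin n) (Fin n) R) (v : Fin n → Fin n → R) :
    Phi A (gam (ExteriorAlgebra.ιMulti R n v)) =
      (gam (ExteriorAlgebra.ιMulti R n (fun i => A *ᵥ v i)) : Lam K R n) := by
  rw [ExteriorAlgebra.ιMulti_apply, ExteriorAlgebra.ιMulti_apply, map_list_prod,
    map_list_prod, map_list_prod, List.map_ofFn, List.map_ofFn, List.map_ofFn]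
  congr 2
  ext i : 1
  simp only [Function.comp_apply]
  rw [gam_ι, gam_ι]
  exact Phi_wv A _

lemma gam_det (v : Fin n → Fin n → R) :
    (gam (ExteriorAlgebra.ιMulti R n v) : Lam K R n) =
      (Pi.basisFun R (Fin n)).det v • gam (ExteriorAlgebra.ιMulti R n (Pi.basisFun R (Fin n))) := by
  have : (gam (K := K) (R := R) (n := n)).toLinearMap.compAlternatingMap
      (ExteriorAlgebra.ιMulti R n) = (LinearMap.toSpanSingleton R (Lam K R n)
        (gam (ExteriorAlgebra.ιMulti R n (Pi.basisFun R (Fin n))))).compAlternatingMap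
          (Pi.basisFun R (Fin n)).det := by
    refine Module.Basis.ext_alternating (Pi.basisFun R (Fin n)) fun i hi => ?_
    let σ : Equiv.Perm (Fin n) := Equiv.ofBijective i (Finite.injective_iff_bijective.1 hi)
    change (gam (K := K) (R := R) (n := n)).toLinearMap.compAlternatingMap _
      (Pi.basisFun R (Fin n) ∘ σ) =
      (LinearMap.compAlternatingMap _ _) (Pi.basisFun R (Fin n) ∘ σ)
    rw [AlternatingMap.map_perm, AlternatingMap.map_perm]
    congr 1
    rw [LinearMap.compAlternatingMap_apply, LinearMap.compAlternatingMap_apply,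
      Module.Basis.det_self, LinearMap.toSpanSingleton_apply, one_smul]
    rfl
  exact DFunLike.congr_fun this v

lemma Phi_top (A : Matrix (Fin n) (Fin n) R) {a : Lam K R n} (ha : a ∈ Lk K R n (n + 1)) :
    Phi A a = A.det • a := by
  refine Lk_induction (P := fun a => Phi A a = A.det • a) (by simp) ?_ ?_ ha
  · intro a b ha hb; rw [map_add, ha, hb, smul_add]
  · intro r x hx
    have hx' : x ∈ Submodule.span K (Set.range (ExteriorAlgebra.ιMulti K n (M := Fin n → K))) := by
      rw [ExteriorAlgebra.ιMulti_span_fixedDegree]; exact hx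
    rw [← mul_one r, ← smul_eq_mul, ← smul_tmul', map_smul, smul_comm]
    congr 1
    clear hx
    induction hx' using Submodule.span_induction with
    | zero => simp
    | add x y _ _ hx hy => rw [tmul_add, map_add, hx, hy, smul_add]
    | smul c x _ hx =>
      rw [tmul_smul, ← algebraMap_smul R c, map_smul, hx, smul_comm]
    | mem x hx =>
      obtain ⟨v, rfl⟩ := hx
      rw [← gam_comp, Phi_gam, gam_det, gam_det (fun i => algebraMap K R ∘ v i), smul_smul]
      congr 1
      have := (Pi.basisFun R (Fin n)).det_comp A.mulVecLin (fun i => algebraMap K R ∘ v i)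
      rw [← Matrix.toLin'_apply', LinearMap.det_toLin'] at this
      exact this

lemma nonempty_equiv (k : ℕ) : Nonempty (Lk K R n (k + 1) ≃ₗ[R] (Fin (n.choose k) → R)) := by
  have h : Module.finrank K (⋀[K]^k (Fin n → K)) = n.choose k := by
    rw [exteriorPower.finrank_eq, Module.finrank_fin_fun]
  let b := Module.finBasisOfFinrankEq K (⋀[K]^k (Fin n → K)) h
  exact ⟨(Submodule.toBaseChange.toLinearEquiv R (Gr K n (k + 1))).symm ≪≫ₗ
    (b.baseChange R).equivFun⟩

lemma dw_top_iff (θ : Lk K R n (n + 1) ≃ₗ[R] R) (v : Fin n → R) (a : Lk K R n (n + 1)) :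
    (∃ b ∈ Lk K R n n, dw v b = a) ↔ θ a ∈ Ideal.span (Set.range v) := by
  constructor
  · rintro ⟨b, hb, hba⟩
    have : a = ∑ i, v i • (⟨ew i b, ew_mem i hb⟩ : Lk K R n (n + 1)) := by
      apply Subtype.ext
      rw [← hba, dw_apply]
      simp
    rw [this, map_sum]
    refine Ideal.sum_mem _ fun i _ => ?_
    rw [map_smul, smul_eq_mul]
    exact Ideal.mul_mem_right _ _ (Ideal.subset_span ⟨i, rfl⟩)
  · intro h
    have key : ∀ r ∈ Ideal.span (Set.range v), ∃ b ∈ Lk K R n n,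
        dw v b = ((r • θ.symm 1 : Lk K R n (n + 1)) : Lam K R n) := by
      intro r hr
      induction hr using Submodule.span_induction with
      | zero => exact ⟨0, Submodule.zero_mem _, by simp⟩
      | add x y _ _ hx hy =>
        obtain ⟨b, hb, hb'⟩ := hx
        obtain ⟨c, hc, hc'⟩ := hy
        exact ⟨b + c, Submodule.add_mem _ hb hc, by rw [map_add, hb', hc', add_smul]; rfl⟩
      | smul s x _ hx =>
        obtain ⟨b, hb, hb'⟩ := hx
        exact ⟨s • b, Submodule.smul_mem _ _ hb, by rw [map_smul, hb', smul_assoc]; rfl⟩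
      | mem x hx =>
        obtain ⟨i, rfl⟩ := hx
        refine ⟨cw i (θ.symm 1), cw_mem i (θ.symm 1).2, ?_⟩
        have h1 := cw_dw v i (θ.symm 1 : Lam K R n)
        have h2 : dw v (θ.symm 1 : Lam K R n) = 0 := by
          have h3 := dw_mem v (θ.symm 1).2
          obtain ⟨e⟩ := nonempty_equiv (K := K) (R := R) (n := n) (n + 1)
          have : IsEmpty (Fin (n.choose (n + 1))) := by
            rw [Nat.choose_succ_self]; infer_instance
          have h4 : (⟨_, h3⟩ : Lk K R n (n + 1 + 1)) = 0 := e.injective (Subsingleton.elim _ _)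
          exact congrArg Subtype.val h4
        rw [h2, map_zero] at h1
        exact (sub_eq_zero.mp h1.symm).symm
    obtain ⟨b, hb, hb'⟩ := key _ h
    refine ⟨b, hb, ?_⟩
    rw [hb', ← map_smul, smul_eq_mul, mul_one, LinearEquiv.symm_apply_apply]

/-- the cone differential -/
noncomputable def Dc (A : Matrix (Fin n) (Fin n) R) (y : Fin n → R) :
    (Lam K R n × Lam K R n) →ₗ[R] (Lam K R n × Lam K R n) :=
  LinearMap.prod (dw y ∘ₗ LinearMap.fst R _ _)
    ((Phi A).toLinearMap ∘ₗ LinearMap.fst R _ _ - dw (A *ᵥ y) ∘ₗ LinearMap.snd R _ _)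

lemma Dc_apply (A : Matrix (Fin n) (Fin n) R) (y : Fin n → R) (a b : Lam K R n) :
    Dc A y (a, b) = (dw y a, Phi A a - dw (A *ᵥ y) b) := rfl

lemma Dc_Dc (A : Matrix (Fin n) (Fin n) R) (y : Fin n → R) (p : Lam K R n × Lam K R n) :
    Dc A y (Dc A y p) = 0 := by
  obtain ⟨a, b⟩ := p
  rw [Dc_apply, Dc_apply, dw_dw, Phi_dw, map_sub, dw_dw, sub_zero, sub_self]
  rfl

lemma cone_exact (A : Matrix (Fin n) (Fin n) R) (y : Fin n → R)
    (hy : ∀ {k : ℕ}, k ≤ n → ∀ {a : Lam K R n}, a ∈ Lk K R n k → dw y a = 0 →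
      ∃ b ∈ Lk K R n (k - 1), dw y b = a)
    (hg : ∀ {k : ℕ}, k ≤ n → ∀ {a : Lam K R n}, a ∈ Lk K R n k → dw (A *ᵥ y) a = 0 →
      ∃ b ∈ Lk K R n (k - 1), dw (A *ᵥ y) b = a)
    (θ : Lk K R n (n + 1) ≃ₗ[R] R)
    (hcol : ∀ r, A.det * r ∈ Ideal.span (Set.range (A *ᵥ y)) → r ∈ Ideal.span (Set.range y))
    {m : ℕ} (hm : m ≤ n) {p : Lam K R n × Lam K R n}
    (hp : p ∈ (Lk K R n (m + 1)).prod (Lk K R n m)) (hd : Dc A y p = 0) :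
    ∃ q ∈ (Lk K R n m).prod (Lk K R n (m - 1)), Dc A y q = p := by
  obtain ⟨a, b⟩ := p
  obtain ⟨ha, hb⟩ := hp
  simp only at ha hb
  rw [Dc_apply, Prod.mk_eq_zero] at hd
  obtain ⟨h1, h2⟩ := hd
  obtain ⟨a', ha', haa⟩ : ∃ a' ∈ Lk K R n m, dw y a' = a := by
    rcases hm.lt_or_eq with h | rfl
    · exact hy (k := m + 1) h ha h1
    · refine (dw_top_iff θ y ⟨a, ha⟩).2 (hcol _ ?_)
      rw [← smul_eq_mul, ← map_smul]
      refine (dw_top_iff θ _ _).1 ⟨b, hb, ?_⟩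
      rw [← sub_eq_zero.mp h2, Phi_top A ha]
      rfl
  have h3 : dw (A *ᵥ y) (Phi A a' - b) = 0 := by
    rw [map_sub, ← Phi_dw, haa, h2]
  obtain ⟨b', hb', hbb⟩ := hg hm (Submodule.sub_mem _ (Phi_mem A ha') hb) h3
  refine ⟨(a', b'), ⟨ha', hb'⟩, ?_⟩
  rw [Dc_apply, haa, hbb, sub_sub_cancel]

variable (K R n) in
/-- terms of the minimal resolution -/
noncomputable def Sc (i : ℕ) : Submodule R (Lam K R n × Lam K R n) :=
  if i = 0 then (⊥ : Submodule R (Lam K R n)).prod (Lk K R n (n + 1))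
  else if i = n then (Lk K R n 2).prod (⊥ : Submodule R (Lam K R n))
  else if i < n then (Lk K R n (n - i + 2)).prod (Lk K R n (n - i + 1))
  else ⊥

/-- reduction of the full cone term to the minimal one -/
lemma reduce (A : Matrix (Fin n) (Fin n) R) (y : Fin n → R) {i : ℕ} (h0 : i ≠ 0) (hi : i ≤ n)
    {p : Lam K R n × Lam K R n}
    (hp : p ∈ (Lk K R n (n - i + 2)).prod (Lk K R n (n - i + 1))) :
    ∃ q ∈ Sc K R n i, Dc A y q = Dc A y p := by
  rcases hi.lt_or_eq with h | rfl
  · exact ⟨p, by rw [Sc, if_neg h0, if_neg h.ne, if_pos h]; exact hp, rfl⟩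
  · obtain ⟨a, b⟩ := p
    obtain ⟨ha, hb⟩ := hp
    simp only [Nat.sub_self, zero_add] at ha hb
    refine ⟨(a, b) - Dc A y (b, 0), ?_, by rw [map_sub, Dc_Dc, sub_zero]⟩
    rw [Sc, if_neg h0, if_pos rfl, Dc_apply, Phi_one A hb, map_zero, sub_zero]
    exact ⟨Submodule.sub_mem _ ha (dw_mem y hb), by simp⟩

lemma Sc_le {i : ℕ} (h0 : i ≠ 0) (hi : i ≤ n) :
    Sc K R n i ≤ (Lk K R n (n - i + 2)).prod (Lk K R n (n - i + 1)) := by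
  rw [Sc, if_neg h0]
  split_ifs with h1 h2
  · subst h1
    rw [Nat.sub_self]
    exact Submodule.prod_mono le_rfl bot_le
  · exact le_rfl
  · exact bot_le

lemma Sc_big {i : ℕ} (h : n < i) : Sc K R n i = ⊥ := by
  rw [Sc, if_neg (by omega), if_neg (by omega), if_neg (by omega)]

lemma Sc_exact (A : Matrix (Fin n) (Fin n) R) (y : Fin n → R)
    (hcone : ∀ {m : ℕ}, m ≤ n → ∀ {p : Lam K R n × Lam K R n},
    p ∈ (Lk K R n (m + 1)).prod (Lk K R n m) → Dc A y p = 0 →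
    ∃ q ∈ (Lk K R n m).prod (Lk K R n (m - 1)), Dc A y q = p)
    (i : ℕ) {p : Lam K R n × Lam K R n} (hp : p ∈ Sc K R n (i + 1)) (hd : Dc A y p = 0) :
    ∃ q ∈ Sc K R n (i + 2), Dc A y q = p := by
  rcases lt_or_ge n (i + 1) with h | h
  · rw [Sc_big h, Submodule.mem_bot] at hp
    exact ⟨0, Submodule.zero_mem _, by rw [hp, map_zero]⟩
  have hp' := Sc_le (by omega) h hp
  obtain ⟨q, hq, hqp⟩ := hcone (m := n - (i + 1) + 1) (by omega) hp' hd
  rcases h.lt_or_eq with h | h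
  · rw [← hqp]
    apply reduce A y (by omega) (by omega)
    convert hq using 3 <;> omega
  · subst h
    refine ⟨0, Submodule.zero_mem _, ?_⟩
    obtain ⟨a, b⟩ := q
    obtain ⟨ha, hb⟩ := hq
    simp only [Nat.sub_self, zero_add, Nat.sub_self] at ha hb
    have hb0 := Lk_zero hb
    subst hb0
    rw [Dc_apply, Phi_one A ha, map_zero, sub_zero] at hqp
    rw [Sc, if_neg (by omega), if_pos rfl, ← hqp] at hp
    have : a = 0 := by simpa using hp.2
    subst this
    rw [← hqp, map_zero, map_zero]; rfl

lemma mem_smul_prod {m : Ideal R} {P Q : Submodule R (Lam K R n)} {a b : Lam K R n}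
    (ha : a ∈ m • P) (hb : b ∈ m • Q) : (a, b) ∈ m • P.prod Q := by
  have h1 : (a, (0 : Lam K R n)) ∈ m • P.prod Q := by
    have : LinearMap.inl R (Lam K R n) (Lam K R n) a ∈ (m • P).map (LinearMap.inl R _ _) :=
      ⟨a, ha, rfl⟩
    rw [Submodule.map_smul''] at this
    refine Submodule.smul_mono (le_refl m) ?_ this
    rintro _ ⟨x, hx, rfl⟩
    exact ⟨hx, by simp⟩
  have h2 : ((0 : Lam K R n), b) ∈ m • P.prod Q := by
    have : LinearMap.inr R (Lam K R n) (Lam K R n) b ∈ (m • Q).map (LinearMap.inr R _ _) :=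
      ⟨b, hb, rfl⟩
    rw [Submodule.map_smul''] at this
    refine Submodule.smul_mono (le_refl m) ?_ this
    rintro _ ⟨x, hx, rfl⟩
    exact ⟨by simp, hx⟩
  have := Submodule.add_mem _ h1 h2
  simpa using this

lemma Lk_top2 {a : Lam K R n} (ha : a ∈ Lk K R n (n + 2)) : a = 0 := by
  obtain ⟨e⟩ := nonempty_equiv (K := K) (R := R) (n := n) (n + 1)
  have : IsEmpty (Fin (n.choose (n + 1))) := by
    rw [Nat.choose_succ_self]; infer_instance
  have h4 : (⟨a, ha⟩ : Lk K R n (n + 1 + 1)) = 0 := e.injective (Subsingleton.elim _ _)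
  exact congrArg Subtype.val h4

lemma Sc_min {m : Ideal R} (A : Matrix (Fin n) (Fin n) R) (hA : ∀ i j, A i j ∈ m)
    (y : Fin n → R) (hym : ∀ i, y i ∈ m) (i : ℕ) {p : Lam K R n × Lam K R n}
    (hp : p ∈ Sc K R n (i + 1)) : Dc A y p ∈ m • Sc K R n i := by
  rcases lt_or_ge n (i + 1) with h | h
  · rw [Sc_big h, Submodule.mem_bot] at hp
    rw [hp, map_zero]; exact Submodule.zero_mem _
  have hgm : ∀ i, (A *ᵥ y) i ∈ m := by
    intro i
    rw [Matrix.mulVec, dotProduct]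
    exact Ideal.sum_mem _ fun j _ => Ideal.mul_mem_right _ _ (hA i j)
  have hp' := Sc_le (by omega) h hp
  obtain ⟨a, b⟩ := p
  obtain ⟨ha, hb⟩ := hp'
  simp only at ha hb
  rw [Dc_apply]
  have h1 := dw_mem_smul hym ha
  have h2 := Submodule.sub_mem _ (Phi_mem_smul A hA ha) (dw_mem_smul hgm hb)
  by_cases hi : i = 0
  · subst hi
    rw [Sc, if_pos rfl]
    refine mem_smul_prod ?_ ?_
    · have h3 : dw y a ∈ Lk K R n (n + 2) := by
        have := dw_mem y ha
        convert this using 2; omega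
      rw [Lk_top2 h3]; exact Submodule.zero_mem _
    · convert h2 using 3; omega
  · rw [Sc, if_neg hi, if_neg (by omega), if_pos (by omega)]
    refine mem_smul_prod ?_ ?_
    · convert h1 using 3; omega
    · convert h2 using 3; omega

/-- product submodule as a product -/
def prodEq (P Q : Submodule R (Lam K R n)) : P.prod Q ≃ₗ[R] P × Q where
  toFun p := (⟨p.1.1, p.2.1⟩, ⟨p.1.2, p.2.2⟩)
  invFun p := ⟨(p.1.1, p.2.1), ⟨p.1.2, p.2.2⟩⟩
  map_add' _ _ := rfl
  map_smul' _ _ := rfl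
  left_inv _ := rfl
  right_inv _ := rfl

lemma prod_equiv {P Q : Submodule R (Lam K R n)} {a b : ℕ}
    (hP : Nonempty (P ≃ₗ[R] (Fin a → R))) (hQ : Nonempty (Q ≃ₗ[R] (Fin b → R))) :
    Nonempty (P.prod Q ≃ₗ[R] (Fin (a + b) → R)) := by
  obtain ⟨e⟩ := hP
  obtain ⟨f⟩ := hQ
  exact ⟨prodEq P Q ≪≫ₗ (e.prodCongr f) ≪≫ₗ
    (LinearEquiv.sumArrowLequivProdArrow (Fin a) (Fin b) R R).symm ≪≫ₗ
    LinearEquiv.funCongrLeft R R finSumFinEquiv.symm⟩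

lemma bot_equiv {W : Type*} [AddCommGroup W] [Module R W] :
    Nonempty ((⊥ : Submodule R W) ≃ₗ[R] (Fin 0 → R)) :=
  ⟨{ (0 : (⊥ : Submodule R W) →ₗ[R] (Fin 0 → R)) with
      invFun := fun _ => 0
      left_inv := fun _ => Subsingleton.elim _ _
      right_inv := fun _ => Subsingleton.elim _ _ }⟩

lemma Sc_equiv (hn : 1 ≤ n) (i : ℕ) : Nonempty (Sc K R n i ≃ₗ[R]
    (Fin (if i = 0 then 1 else if i = n then n
        else if i < n then n.choose (i - 1) + n.choose i else 0) → R)) := by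
  have hb : ∀ (P : Submodule R (Lam K R n × Lam K R n)) (j : ℕ), Sc K R n i = P →
      (∃ k, k = j ∧ Nonempty (P ≃ₗ[R] (Fin k → R))) →
      Nonempty (Sc K R n i ≃ₗ[R] (Fin j → R)) := by
    rintro P j rfl ⟨k, rfl, h⟩; exact h
  by_cases h0 : i = 0
  · rw [if_pos h0]
    exact hb _ _ (by rw [Sc, if_pos h0]) ⟨0 + n.choose n, by simp,
      prod_equiv bot_equiv (nonempty_equiv n)⟩
  rw [if_neg h0]
  by_cases h1 : i = n
  · rw [if_pos h1]
    exact hb _ _ (by rw [Sc, if_neg h0, if_pos h1]) ⟨n.choose 1 + 0, by simp,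
      prod_equiv (nonempty_equiv 1) bot_equiv⟩
  rw [if_neg h1]
  by_cases h2 : i < n
  · rw [if_pos h2]
    refine hb _ _ (by rw [Sc, if_neg h0, if_neg h1, if_pos h2])
      ⟨n.choose (n - i + 1) + n.choose (n - i), ?_,
      prod_equiv (nonempty_equiv (n - i + 1)) (nonempty_equiv (n - i))⟩
    rw [Nat.choose_symm h2.le, ← Nat.choose_symm (n := n) (k := i - 1) (by omega)]
    congr 2; omega
  · rw [if_neg h2]
    exact hb _ _ (by rw [Sc, if_neg h0, if_neg h1, if_neg h2]) ⟨0, rfl, bot_equiv⟩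

end general


lemma isMin_of_data {R : Type*} [CommRing R] (m : Ideal R) {W : Type*} [AddCommGroup W]
    [Module R W] (D : W →ₗ[R] W) (S : ℕ → Submodule R W) (β : ℕ → ℕ)
    (he : ∀ i, Nonempty (S i ≃ₗ[R] (Fin (β i) → R))) {M : Type*} [AddCommGroup M] [Module R M]
    (ε : S 0 →ₗ[R] M) (hε : Function.Surjective ε)
    (hmin : ∀ i, ∀ p ∈ S (i + 1), D p ∈ m • S i)
    (h0 : ∀ p : S 0, ε p = 0 ↔ ∃ q ∈ S 1, D q = p) (hD : ∀ p, D (D p) = 0)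
    (hex : ∀ i, ∀ p ∈ S (i + 1), D p = 0 → ∃ q ∈ S (i + 2), D q = p) :
    IsMinimalFreeRes m M β := by
  have e : ∀ i, S i ≃ₗ[R] (Fin (β i) → R) := fun i => (he i).some
  have hmem : ∀ i, ∀ p ∈ S (i + 1), D p ∈ S i := fun i p hp =>
    Submodule.smul_le_right (hmin i p hp)
  let f : ∀ i, S (i + 1) →ₗ[R] S i := fun i => D.restrict (hmem i)
  have hf : ∀ i p, ((f i p : S i) : W) = D p := fun i p => rfl
  refine ⟨fun i => (e i).toLinearMap ∘ₗ f i ∘ₗ (e (i + 1)).symm.toLinearMap,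
    ε ∘ₗ (e 0).symm.toLinearMap, hε.comp (e 0).symm.surjective, ?_, ?_, ?_⟩
  · ext x
    rw [LinearMap.mem_ker, LinearMap.mem_range]
    constructor
    · intro h
      obtain ⟨q, hq, hqp⟩ := (h0 _).1 h
      refine ⟨e 1 ⟨q, hq⟩, ?_⟩
      have : f 0 ⟨q, hq⟩ = (e 0).symm x := Subtype.ext hqp
      simp [this]
    · rintro ⟨z, rfl⟩
      refine (h0 _).2 ⟨_, ((e 1).symm z).2, ?_⟩
      simp [hf]
  · intro i
    ext x
    rw [LinearMap.mem_ker, LinearMap.mem_range]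
    constructor
    · intro h
      have h1 : f i ((e (i + 1)).symm x) = 0 := by simpa using h
      obtain ⟨q, hq, hqp⟩ := hex i _ ((e (i + 1)).symm x).2 (congrArg Subtype.val h1)
      refine ⟨e (i + 2) ⟨q, hq⟩, ?_⟩
      have : f (i + 1) ⟨q, hq⟩ = (e (i + 1)).symm x := Subtype.ext hqp
      simp [this]
    · rintro ⟨z, rfl⟩
      have : f i (f (i + 1) ((e (i + 1 + 1)).symm z)) = 0 := Subtype.ext (by rw [hf, hf, hD]; rfl)
      simp [this]
  · rintro i _ ⟨x, rfl⟩
    have h1 := hmin i _ ((e (i + 1)).symm x).2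
    have h2 : m • S i = (m • (⊤ : Submodule R (S i))).map (S i).subtype := by
      rw [Submodule.map_smul'', Submodule.map_subtype_top]
    rw [h2] at h1
    obtain ⟨z, hz, hzx⟩ := h1
    have h3 : f i ((e (i + 1)).symm x) = z := Subtype.ext hzx.symm
    have h4 : e i z ∈ (m • (⊤ : Submodule R (S i))).map (e i).toLinearMap := ⟨z, hz, rfl⟩
    rw [Submodule.map_smul''] at h4
    simp only [LinearMap.comp_apply, LinearEquiv.coe_coe, h3]
    exact Submodule.smul_mono (le_refl m) le_top h4

section poly
variable {σ K : Type*} [Field K]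

/-- division by a monomial as a linear map -/
noncomputable def divm (s : σ →₀ ℕ) : MvPolynomial σ K →ₗ[K] MvPolynomial σ K where
  toFun p := p.divMonomial s
  map_add' x y := add_divMonomial x y s
  map_smul' r x := by ext; simp [coeff_divMonomial]

lemma divm_h1 (s : σ →₀ ℕ) (f : MvPolynomial σ K) :
    divm s (monomial s 1 * f) = f := divMonomial_monomial_mul s f

lemma divm_h2 {s t : σ →₀ ℕ} (hst : ∀ x, s x = 0 ∨ t x = 0) (f : MvPolynomial σ K) :
    divm s (monomial t 1 * f) = monomial t 1 * divm s f := by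
  ext d
  change coeff d ((monomial t 1 * f).divMonomial s) = coeff d (monomial t 1 * f.divMonomial s)
  have h : t ≤ s + d ↔ t ≤ d := by
    constructor
    · intro h x
      have := h x
      rw [Finsupp.add_apply] at this
      rcases hst x with h' | h' <;> omega
    · intro h
      exact h.trans le_add_self
  rw [coeff_divMonomial, coeff_monomial_mul', coeff_monomial_mul']
  simp only [h]
  split_ifs with h1
  · rw [coeff_divMonomial, add_tsub_assoc_of_le h1]
  · rfl

variable (wt : σ → ℕ)

lemma whc_mul (t : σ →₀ ℕ) (f : MvPolynomial σ K) (e k : ℕ) (hk : Finsupp.weight wt t = k) :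
    weightedHomogeneousComponent wt (e + k) (monomial t 1 * f) =
      monomial t 1 * weightedHomogeneousComponent wt e f := by
  classical
  ext d
  rw [coeff_weightedHomogeneousComponent, coeff_monomial_mul', coeff_monomial_mul']
  by_cases h : t ≤ d
  · obtain ⟨d, rfl⟩ := exists_add_of_le h
    rw [if_pos h, if_pos h, coeff_weightedHomogeneousComponent, add_tsub_cancel_left, map_add, hk]
    have : k + Finsupp.weight wt d = e + k ↔ Finsupp.weight wt d = e := by omega
    simp only [this]
    split_ifs <;> simp
  · rw [if_neg h, if_neg h, ite_self]

lemma whc_mul_zero (t : σ →₀ ℕ) (f : MvPolynomial σ K) (hk : Finsupp.weight wt t ≠ 0) :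
    weightedHomogeneousComponent wt 0 (monomial t 1 * f) = 0 := by
  classical
  ext d
  rw [coeff_weightedHomogeneousComponent, coeff_monomial_mul']
  by_cases h : t ≤ d
  · obtain ⟨d, rfl⟩ := exists_add_of_le h
    rw [map_add, if_neg (by omega), coeff_zero]
  · rw [if_neg h, ite_self, coeff_zero]

lemma whc_idem (e : ℕ) (f : MvPolynomial σ K) :
    weightedHomogeneousComponent wt e (weightedHomogeneousComponent wt e f) =
      weightedHomogeneousComponent wt e f := by
  classical
  ext d
  simp only [coeff_weightedHomogeneousComponent]
  split_ifs <;> rfl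

lemma whc_orth (e e' : ℕ) (f : MvPolynomial σ K) (h : e ≠ e') :
    weightedHomogeneousComponent wt e (weightedHomogeneousComponent wt e' f) = 0 := by
  classical
  ext d
  simp only [coeff_weightedHomogeneousComponent, coeff_zero]
  split_ifs with h1 h2
  · omega
  · rfl
  · rfl

lemma whc_sum (f : MvPolynomial σ K) : ∃ N, ∀ M, N ≤ M →
    ∑ e ∈ Finset.range M, weightedHomogeneousComponent wt e f = f := by
  classical
  refine ⟨weightedTotalDegree wt f + 1, fun M hM => ?_⟩
  ext d
  rw [coeff_sum]
  simp only [coeff_weightedHomogeneousComponent]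
  rw [Finset.sum_ite_eq]
  split_ifs with h
  · rfl
  · by_contra hne
    have := le_weightedTotalDegree wt (mem_support_iff.2 (Ne.symm hne))
    rw [Finset.mem_range] at h
    omega

end poly

section main
variable {K : Type*} [Field K] {n : ℕ}

local notation "RR" => MvPolynomial ((Fin n × Fin n) ⊕ Fin n) K

variable (K n) in
/-- generic matrix -/
noncomputable def Ag : Matrix (Fin n) (Fin n) RR := Matrix.of fun i j => X (Sum.inl (i, j))

variable (K n) in
/-- generic vector -/
noncomputable def yg : Fin n → RR := fun j => X (Sum.inr j)

lemma koszul_mon (t : Fin n → (((Fin n × Fin n) ⊕ Fin n) →₀ ℕ))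
    (ht : ∀ i j, i ≠ j → ∀ x, t i x = 0 ∨ t j x = 0)
    {k : ℕ} (hk : k ≤ n) {a : Lam K RR n} (ha : a ∈ Lk K RR n k)
    (hd : dw (fun i => (monomial (t i) 1 : RR)) a = 0) :
    ∃ b ∈ Lk K RR n (k - 1), dw (fun i => (monomial (t i) 1 : RR)) b = a :=
  koszul_of_div (fun i => (monomial (t i) 1 : RR)) (fun i => divm (t i))
    (fun i f => divm_h1 (t i) f) (fun i j hij f => divm_h2 (ht i j hij) f) hk ha hd

lemma koszul_y {k : ℕ} (hk : k ≤ n) {a : Lam K RR n} (ha : a ∈ Lk K RR n k)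
    (hd : dw (yg K n) a = 0) : ∃ b ∈ Lk K RR n (k - 1), dw (yg K n) b = a := by
  refine koszul_mon (fun i => Finsupp.single (Sum.inr i) 1) ?_ hk ha hd
  intro i j hij x
  by_cases h : x = Sum.inr i
  · right
    rw [Finsupp.single_apply_eq_zero]
    rintro rfl
    exact absurd (Sum.inr_injective h).symm hij
  · left
    rw [Finsupp.single_apply_eq_zero]
    intro h'; exact absurd h' h

/-- diagonal weight -/
def wtd (n : ℕ) : (Fin n × Fin n) ⊕ Fin n → ℕ :=
  Sum.elim (fun p => if p.1 = p.2 then 1 else 0) (fun _ => 0)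

/-- exponent of `x i j * y j` -/
noncomputable def ex (i j : Fin n) : ((Fin n × Fin n) ⊕ Fin n) →₀ ℕ :=
  Finsupp.single (Sum.inl (i, j)) 1 + Finsupp.single (Sum.inr j) 1

lemma monomial_ex (i j : Fin n) : (monomial (ex i j) 1 : RR) = X (Sum.inl (i, j)) * X (Sum.inr j) := by
  rw [ex, X, X, monomial_mul, one_mul]

lemma weight_ex (i j : Fin n) : Finsupp.weight (wtd n) (ex i j) = if i = j then 1 else 0 := by
  rw [ex, map_add, Finsupp.weight_single, Finsupp.weight_single]
  simp [wtd]

lemma koszul_g {k : ℕ} (hk : k ≤ n) {a : Lam K RR n} (ha : a ∈ Lk K RR n k)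
    (hd : dw (Ag K n *ᵥ yg K n) a = 0) :
    ∃ b ∈ Lk K RR n (k - 1), dw (Ag K n *ᵥ yg K n) b = a := by
  classical
  have hsplit : Ag K n *ᵥ yg K n = (fun i => (monomial (ex i i) 1 : RR)) +
      fun i => ∑ j ∈ Finset.univ.erase i, (monomial (ex i j) 1 : RR) := by
    funext i
    rw [Pi.add_apply, Finset.add_sum_erase _ (fun j => (monomial (ex i j) 1 : RR)) (Finset.mem_univ i)]
    simp only [monomial_ex]
    rfl
  rw [hsplit] at hd ⊢
  refine koszul_weight _ _ (fun e => weightedHomogeneousComponent (wtd n) e) ?_ ?_ ?_ ?_ ?_ ?_ ?_ hk ha hd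
  · intro e i f
    exact whc_mul _ _ _ _ 1 (by rw [weight_ex, if_pos rfl])
  · intro i f
    exact whc_mul_zero _ _ _ (by rw [weight_ex, if_pos rfl]; exact one_ne_zero)
  · intro e i f
    rw [Finset.sum_mul, Finset.sum_mul, map_sum]
    refine Finset.sum_congr rfl fun j hj => ?_
    exact whc_mul _ _ _ e 0 (by rw [weight_ex, if_neg (Finset.ne_of_mem_erase hj).symm])
  · intro e f; exact whc_idem _ e f
  · intro e e' f h; exact whc_orth _ e e' f h
  · intro f; exact whc_sum _ f
  · intro k hk a ha hd
    refine koszul_mon (fun i => ex i i) ?_ hk ha hd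
    intro i j hij x
    rcases x with ⟨p, q⟩ | p
    · simp only [ex, Finsupp.add_apply, Finsupp.single_apply, Sum.inl.injEq, Prod.mk.injEq,
        reduceCtorEq, if_false]
      by_cases h : i = p
      · right; rw [if_neg (by rintro ⟨h1, h2⟩; exact hij (h.trans h1.symm))] <;> rfl
      · left; rw [if_neg (by rintro ⟨h1, h2⟩; exact h h1)] <;> rfl
    · simp only [ex, Finsupp.add_apply, Finsupp.single_apply, Sum.inr.injEq,
        reduceCtorEq, if_false]
      by_cases h : i = p
      · right; rw [if_neg (by rintro h1; exact hij (h.trans h1.symm))] <;> rfl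
      · left; rw [if_neg h] <;> rfl

lemma colon (r : RR) (h : (Ag K n).det * r ∈ Ideal.span (Set.range (Ag K n *ᵥ yg K n))) :
    r ∈ Ideal.span (Set.range (yg K n)) := by
  let ψ : RR →ₐ[K] RR := aeval (Sum.elim (fun p => X (Sum.inl p)) (fun _ => 0))
  have hψ : ∀ f : RR, f - ψ f ∈ Ideal.span (Set.range (yg K n)) := by
    intro f
    rw [← Ideal.Quotient.mk_eq_mk_iff_sub_mem]
    have : (Ideal.Quotient.mkₐ K (Ideal.span (Set.range (yg K n)))) =
        (Ideal.Quotient.mkₐ K (Ideal.span (Set.range (yg K n)))).comp ψ := by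
      apply MvPolynomial.algHom_ext
      rintro (p | j)
      · simp [ψ]
      · simp only [AlgHom.comp_apply, ψ, aeval_X, Sum.elim_inr, map_zero]
        exact Ideal.Quotient.eq_zero_iff_mem.2 (Ideal.subset_span ⟨j, rfl⟩)
    exact DFunLike.congr_fun this f
  have hker : ψ ((Ag K n).det * r) = 0 := by
    have : Ideal.span (Set.range (Ag K n *ᵥ yg K n)) ≤ RingHom.ker ψ := by
      rw [Ideal.span_le]
      rintro _ ⟨i, rfl⟩
      simp [RingHom.mem_ker, Matrix.mulVec, dotProduct, yg, ψ]
    exact this h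
  have hdet : ψ (Ag K n).det ≠ 0 := by
    intro h0
    have h1 := congrArg (aeval (R := K) (Sum.elim (fun p : Fin n × Fin n => if p.1 = p.2 then (1 : K) else 0)
      (fun _ => 0))) h0
    rw [map_zero, AlgHom.map_det, AlgHom.map_det] at h1
    have h2 : (AlgHom.mapMatrix (aeval (R := K) (Sum.elim (fun p : Fin n × Fin n => if p.1 = p.2 then (1 : K) else 0)
      (fun _ => 0)))) ((AlgHom.mapMatrix ψ) (Ag K n)) = 1 := by
      ext i j
      simp [Ag, ψ, Matrix.one_apply]
    rw [h2, Matrix.det_one] at h1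
    exact one_ne_zero h1
  rw [map_mul] at hker
  have h3 := (mul_eq_zero.1 hker).resolve_left hdet
  have h4 := hψ r
  rwa [h3, sub_zero] at h4

lemma theta (K R : Type*) [Field K] [CommRing R] [Algebra K R] (n : ℕ) :
    Nonempty (Lk K R n (n + 1) ≃ₗ[R] R) := by
  obtain ⟨e⟩ := nonempty_equiv (K := K) (R := R) (n := n) n
  have : Unique (Fin (n.choose n)) := by rw [Nat.choose_self]; infer_instance
  exact ⟨e ≪≫ₗ LinearEquiv.funUnique _ R R⟩

theorem main (hn : 1 ≤ n) : IsMinimalFreeRes (Ideal.span (Set.range (X : _ → RR)))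
    (RR ⧸ Ideal.span (insert (Ag K n).det (Set.range (Ag K n *ᵥ yg K n))))
      (fun i => if i = 0 then 1 else if i = n then n
        else if i < n then n.choose (i - 1) + n.choose i else 0) := by
  obtain ⟨θ⟩ := theta K RR n
  have hS0 : Sc K RR n 0 = (⊥ : Submodule RR (Lam K RR n)).prod (Lk K RR n (n + 1)) := by
    rw [Sc, if_pos rfl]
  have hs : ∀ p ∈ Sc K RR n 0, p.2 ∈ Lk K RR n (n + 1) := by
    intro p hp; rw [hS0] at hp; exact hp.2
  let τ : Sc K RR n 0 →ₗ[RR] RR := θ.toLinearMap ∘ₗ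
    (LinearMap.snd RR (Lam K RR n) (Lam K RR n)).restrict hs
  have hτ : ∀ p : Sc K RR n 0, τ p = θ ⟨p.1.2, hs p.1 p.2⟩ := fun p => rfl
  have hA : ∀ i j, Ag K n i j ∈ Ideal.span (Set.range (X : _ → RR)) :=
    fun i j => Ideal.subset_span ⟨_, rfl⟩
  have hy : ∀ i, yg K n i ∈ Ideal.span (Set.range (X : _ → RR)) :=
    fun i => Ideal.subset_span ⟨_, rfl⟩
  refine isMin_of_data _ (Dc (Ag K n) (yg K n)) (Sc K RR n) _ (Sc_equiv hn)
    ((Submodule.mkQ _) ∘ₗ τ) ?_ (fun i p hp => Sc_min _ hA _ hy i hp) ?_ (Dc_Dc _ _) ?_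
  · refine (Submodule.mkQ_surjective _).comp ?_
    intro r
    refine ⟨⟨(0, θ.symm r), by rw [hS0]; exact ⟨by simp, (θ.symm r).2⟩⟩, ?_⟩
    rw [hτ]
    simp
  · rintro ⟨⟨a, b⟩, hp⟩
    have hp' := hp
    rw [hS0] at hp'
    obtain ⟨ha, hb⟩ := hp'
    simp only at ha hb
    subst ha
    rw [LinearMap.comp_apply, Submodule.mkQ_apply, Submodule.Quotient.mk_eq_zero, hτ]
    simp only
    constructor
    · intro h
      obtain ⟨r, z, hz, hrz⟩ := Ideal.mem_span_insert.1 h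
      obtain ⟨c, hc, hcz⟩ := (dw_top_iff θ (Ag K n *ᵥ yg K n) (θ.symm (-z))).2
        (by rw [LinearEquiv.apply_symm_apply]; exact neg_mem hz)
      have hq : ((θ.symm r : Lam K RR n), c) ∈
          (Lk K RR n (n - 1 + 2)).prod (Lk K RR n (n - 1 + 1)) := by
        refine ⟨?_, ?_⟩
        · rw [show n - 1 + 2 = n + 1 by omega]; exact (θ.symm r).2
        · rw [show n - 1 + 1 = n by omega]; exact hc
      obtain ⟨q, hq1, hq2⟩ := reduce (Ag K n) (yg K n) one_ne_zero hn hq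
      refine ⟨q, hq1, ?_⟩
      rw [hq2, Dc_apply, Lk_top2 (dw_mem _ (θ.symm r).2), Phi_top _ (θ.symm r).2, hcz]
      refine Prod.ext rfl ?_
      have : (Ag K n).det • θ.symm r - θ.symm (-z) = ⟨b, hb⟩ := by
        apply θ.injective
        rw [map_sub, map_smul, LinearEquiv.apply_symm_apply, LinearEquiv.apply_symm_apply, hrz,
          smul_eq_mul, sub_neg_eq_add, mul_comm]
      exact congrArg Subtype.val this
    · rintro ⟨⟨c, d⟩, hq, hqD⟩
      obtain ⟨hc, hd⟩ := Sc_le one_ne_zero hn hq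
      have e1 : n - 1 + 2 = n + 1 := by omega
      have e2 : n - 1 + 1 = n := by omega
      simp only at hc hd
      rw [e1] at hc
      rw [e2] at hd
      rw [Dc_apply, Phi_top _ hc] at hqD
      have h2 := congrArg Prod.snd hqD
      simp only at h2
      have h3 : (⟨b, hb⟩ : Lk K RR n (n + 1)) = (Ag K n).det • ⟨c, hc⟩ -
          ⟨dw (Ag K n *ᵥ yg K n) d, dw_mem _ hd⟩ := Subtype.ext h2.symm
      rw [h3, map_sub, map_smul, smul_eq_mul]
      refine sub_mem ?_ ?_
      · exact Ideal.mul_mem_right _ _ (Ideal.subset_span (Set.mem_insert _ _))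
      · exact Ideal.span_mono (Set.subset_insert _ _) ((dw_top_iff θ _ _).1 ⟨d, hd, rfl⟩)
  · intro i p hp hd
    exact Sc_exact _ _ (fun hm _ hp hd => cone_exact _ _ (fun hk _ ha hd => koszul_y hk ha hd)
      (fun hk _ ha hd => koszul_g hk ha hd) θ colon hm hp hd) i hp hd

end main

end Northcott

/-- With `R = K[x i j, y j]`, `g i = ∑ j x i j * y j`, and `Δ = det X`, the ideal
`⟨g 1, …, g n, Δ⟩` has total Betti numbers `β 0 = 1`,
`β i = n.choose (i−1) + n.choose i` for `1 ≤ i ≤ n−1`, and `β n = n`. -/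
theorem betti_numbers_generic_northcott
    {K : Type*} [Field K] (n : ℕ) (hn : 1 ≤ n)
    (Xv : Fin n → Fin n → MvPolynomial ((Fin n × Fin n) ⊕ Fin n) K)
    (yv : Fin n → MvPolynomial ((Fin n × Fin n) ⊕ Fin n) K)
    (hX : ∀ i j, Xv i j = MvPolynomial.X (Sum.inl (i, j)))
    (hy : ∀ j, yv j = MvPolynomial.X (Sum.inr j))
    (g : Fin n → MvPolynomial ((Fin n × Fin n) ⊕ Fin n) K)
    (hg : ∀ i, g i = ∑ j, Xv i j * yv j) :
    IsMinimalFreeRes (Ideal.span (Set.range (MvPolynomial.X :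
        ((Fin n × Fin n) ⊕ Fin n) → MvPolynomial ((Fin n × Fin n) ⊕ Fin n) K)))
      (MvPolynomial ((Fin n × Fin n) ⊕ Fin n) K ⧸
        Ideal.span (insert (Matrix.of Xv).det (Set.range g)))
      (fun i => if i = 0 then 1 else if i = n then n
        else if i < n then n.choose (i - 1) + n.choose i else 0) := by

  have h1 : Matrix.of Xv = Northcott.Ag K n := by
    ext1 i j
    exact hX i j
  have h2 : yv = Northcott.yg K n := funext hy
  have h3 : g = Northcott.Ag K n *ᵥ Northcott.yg K n := by
    funext i
    rw [hg, ← h1, ← h2]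
    rfl
  rw [h1, h3]
  exact Northcott.main hn
end

section
/- Let X̂ be the (n+1)×n generic matrix, Y the generic n×1 column over a field K, and J = I_1(X̂Y) = ⟨g_1, ..., g_{n+1}⟩ ⊆ R̂ = K[x_{ij}, y_j]. Then the total Betti numbers of R̂/J are β_0 = 1, β_1 = n+1, β_{k+1} = C(n,k) + C(n,k−1) + C(n,k+1) for 1 ≤ k < n, and β_{n+1} = n. -/
open MvPolynomial Matrix

namespace BettiAux

/-- Index set for the standard basis of the exterior algebra on `m` generators. -/
def Idx : ℕ → Type
  | 0 => Unit
  | m + 1 => Idx m ⊕ Idx m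

instance instFintypeIdx : ∀ m, Fintype (Idx m)
  | 0 => inferInstanceAs (Fintype Unit)
  | m + 1 => by
    haveI := instFintypeIdx m
    exact inferInstanceAs (Fintype (Idx m ⊕ Idx m))

/-- degree of a basis element -/
def sz : ∀ m, Idx m → ℕ
  | 0, _ => 0
  | m + 1, b => Sum.elim (sz m) (fun c => sz m c + 1) b

/-- top basis element -/
def tp : ∀ m, Idx m
  | 0 => ()
  | m + 1 => Sum.inr (tp m)

/-- pairing -/
def pr {m : ℕ} {R : Type*} (u v : Idx m → R) : Idx (m + 1) → R := Sum.elim u v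

/-- first component -/
def p1 {m : ℕ} {R : Type*} (u : Idx (m + 1) → R) : Idx m → R := fun b => u (Sum.inl b)

/-- second component -/
def p2 {m : ℕ} {R : Type*} (u : Idx (m + 1) → R) : Idx m → R := fun b => u (Sum.inr b)

section basic
variable {R : Type*} {m : ℕ}

@[simp] lemma p1_pr (u v : Idx m → R) : p1 (pr u v) = u := rfl
@[simp] lemma p2_pr (u v : Idx m → R) : p2 (pr u v) = v := rfl
lemma pr_ext {u v : Idx (m + 1) → R} (h1 : p1 u = p1 v) (h2 : p2 u = p2 v) : u = v := by
  funext b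
  rcases b with b | b
  · exact congrFun h1 b
  · exact congrFun h2 b
@[simp] lemma pr_p (u : Idx (m + 1) → R) : pr (p1 u) (p2 u) = u := pr_ext rfl rfl
variable [CommRing R]
@[simp] lemma p1_add (u v : Idx (m + 1) → R) : p1 (u + v) = p1 u + p1 v := rfl
@[simp] lemma p2_add (u v : Idx (m + 1) → R) : p2 (u + v) = p2 u + p2 v := rfl
@[simp] lemma p1_sub (u v : Idx (m + 1) → R) : p1 (u - v) = p1 u - p1 v := rfl
@[simp] lemma p2_sub (u v : Idx (m + 1) → R) : p2 (u - v) = p2 u - p2 v := rfl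
@[simp] lemma p1_neg (u : Idx (m + 1) → R) : p1 (-u) = - p1 u := rfl
@[simp] lemma p2_neg (u : Idx (m + 1) → R) : p2 (-u) = - p2 u := rfl
@[simp] lemma p1_smul (r : R) (u : Idx (m + 1) → R) : p1 (r • u) = r • p1 u := rfl
@[simp] lemma p2_smul (r : R) (u : Idx (m + 1) → R) : p2 (r • u) = r • p2 u := rfl
@[simp] lemma p1_zero : p1 (0 : Idx (m + 1) → R) = 0 := rfl
@[simp] lemma p2_zero : p2 (0 : Idx (m + 1) → R) = 0 := rfl
end basic

section ops
variable {R : Type*} [CommRing R]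

/-- left exterior multiplication by a vector -/
def L : ∀ m, (Fin m → R) → (Idx m → R) → (Idx m → R)
  | 0, _, _ => 0
  | m + 1, g, U => pr (L m (Fin.tail g) (p1 U)) (g 0 • p1 U - L m (Fin.tail g) (p2 U))

/-- constants -/
def cst : ∀ m, R → (Idx m → R)
  | 0, r => fun _ => r
  | m + 1, r => pr (cst m r) 0

/-- the algebra map on exterior algebras induced by a matrix -/
def XX (m : ℕ) : ∀ n, (Fin m → Fin n → R) → (Idx n → R) → (Idx m → R)
  | 0, _, w => cst m (w ())
  | n + 1, x, w => XX m n (fun i => Fin.tail (x i)) (p1 w) +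
      L m (fun i => x i 0) (XX m n (fun i => Fin.tail (x i)) (p2 w))

/-- contraction -/
def ct : ∀ n, Fin n → (Idx n → R) → (Idx n → R)
  | 0, _, _ => 0
  | n + 1, j, w => Fin.cases (motive := fun _ => Idx (n+1) → R) (pr (p2 w) 0) (fun j => pr (ct n j (p1 w)) (- ct n j (p2 w))) j

lemma L_add : ∀ m (g : Fin m → R) (u v : Idx m → R), L m g (u + v) = L m g u + L m g v
  | 0, _, _, _ => by simp [L]
  | m + 1, g, u, v => by
    apply pr_ext <;> simp only [L, p1_pr, p2_pr, p1_add, p2_add, L_add m]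
    module

lemma L_smul : ∀ m (g : Fin m → R) (r : R) (u : Idx m → R), L m g (r • u) = r • L m g u
  | 0, _, _, _ => by simp [L]
  | m + 1, g, r, u => by
    apply pr_ext <;> simp only [L, p1_pr, p2_pr, p1_smul, p2_smul, L_smul m]
    module

lemma L_zero (m) (g : Fin m → R) : L m g 0 = 0 := by
  have := L_smul m g 0 0
  simpa using this
lemma L_neg (m) (g : Fin m → R) (u) : L m g (-u) = - L m g u := by
  have := L_smul m g (-1) u
  simpa using this
lemma L_sub (m) (g : Fin m → R) (u v) : L m g (u - v) = L m g u - L m g v := by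
  rw [sub_eq_add_neg, L_add, L_neg, sub_eq_add_neg]

lemma L_gadd : ∀ m (g h : Fin m → R) (u : Idx m → R),
    L m (fun i => g i + h i) u = L m g u + L m h u
  | 0, _, _, _ => by simp [L]
  | m + 1, g, h, u => by
    have e : Fin.tail (fun i => g i + h i) = fun i => Fin.tail g i + Fin.tail h i := rfl
    apply pr_ext <;> simp only [L, p1_pr, p2_pr, p1_add, p2_add, e, L_gadd m]
    module

lemma L_gsmul : ∀ m (g : Fin m → R) (r : R) (u : Idx m → R),
    L m (fun i => g i * r) u = r • L m g u
  | 0, _, _, _ => by simp [L]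
  | m + 1, g, r, u => by
    have e : Fin.tail (fun i => g i * r) = fun i => Fin.tail g i * r := rfl
    apply pr_ext <;> simp only [L, p1_pr, p2_pr, p1_smul, p2_smul, e, L_gsmul m]
    module

lemma L_gzero (m) (u : Idx m → R) : L m (fun _ => 0) u = 0 := by
  have := L_gsmul m (fun _ => 0) 0 u
  simpa using this

lemma L_anti : ∀ m (g h : Fin m → R) (u : Idx m → R), L m g (L m h u) = - L m h (L m g u)
  | 0, _, _, _ => by simp [L]
  | m + 1, g, h, u => by
    apply pr_ext <;> simp only [L, p1_pr, p2_pr, p1_neg, p2_neg]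
    · rw [L_anti m]
    · simp only [L_sub, L_smul]
      rw [L_anti m _ _ (p2 u)]
      module

lemma L_sq : ∀ m (g : Fin m → R) (u : Idx m → R), L m g (L m g u) = 0
  | 0, _, _ => by simp [L]
  | m + 1, g, u => by
    apply pr_ext <;> simp only [L, p1_pr, p2_pr, p1_zero, p2_zero, L_sq m]
    simp only [L_sub, L_smul, L_sq m]
    module

lemma L_pr (m) (g : Fin (m + 1) → R) (u v : Idx m → R) :
    L (m + 1) g (pr u v) = pr (L m (Fin.tail g) u) (g 0 • u - L m (Fin.tail g) v) := rfl

lemma cst_add : ∀ m (r s : R), cst m (r + s) = cst m r + cst m s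
  | 0, _, _ => rfl
  | m + 1, r, s => by apply pr_ext <;> simp [cst, cst_add m]
lemma cst_smul : ∀ m (r s : R), cst m (r * s) = r • cst m s
  | 0, _, _ => rfl
  | m + 1, r, s => by apply pr_ext <;> simp [cst, cst_smul m]

lemma XX_add (m) : ∀ n (x : Fin m → Fin n → R) (u v : Idx n → R),
    XX m n x (u + v) = XX m n x u + XX m n x v
  | 0, _, u, v => cst_add m (u ()) (v ())
  | n + 1, x, u, v => by
    simp only [XX, p1_add, p2_add, XX_add m n, L_add]; abel

lemma XX_smul (m) : ∀ n (x : Fin m → Fin n → R) (r : R) (u : Idx n → R),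
    XX m n x (r • u) = r • XX m n x u
  | 0, _, r, u => cst_smul m r (u ())
  | n + 1, x, r, u => by
    simp only [XX, p1_smul, p2_smul, XX_smul m n, L_smul, smul_add]

lemma XX_zero (m n) (x : Fin m → Fin n → R) : XX m n x 0 = 0 := by
  have := XX_smul m n x 0 0
  simpa using this
lemma XX_neg (m n) (x : Fin m → Fin n → R) (u) : XX m n x (-u) = - XX m n x u := by
  have := XX_smul m n x (-1) u
  simpa using this
lemma XX_sub (m n) (x : Fin m → Fin n → R) (u v) :
    XX m n x (u - v) = XX m n x u - XX m n x v := by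
  rw [sub_eq_add_neg, XX_add, XX_neg, sub_eq_add_neg]

lemma XX_L (m) : ∀ n (x : Fin m → Fin n → R) (y : Fin n → R) (w : Idx n → R),
    XX m n x (L n y w) = L m (fun i => ∑ j, x i j * y j) (XX m n x w)
  | 0, x, y, w => by
    have : (fun i : Fin m => ∑ j, x i j * y j) = fun _ => 0 := by funext i; simp
    rw [this, L_gzero]
    show XX m 0 x 0 = 0
    exact XX_zero _ _ _
  | n + 1, x, y, w => by
    have : (fun i : Fin m => ∑ j, x i j * y j) =
      fun i => (x i 0 * y 0) + (∑ j, Fin.tail (x i) j * Fin.tail y j) := by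
      funext i; rw [Fin.sum_univ_succ]; rfl
    rw [this, L_gadd, L_gsmul m (fun i => x i 0) (y 0)]
    simp only [XX, L, p1_pr, p2_pr, XX_sub, XX_smul, XX_L m n, L_add, L_sub, L_smul, L_sq]
    rw [L_anti m _ (fun i => x i 0)]
    module

lemma XX_p1 (m) : ∀ n (x : Fin (m + 1) → Fin n → R) (w : Idx n → R),
    p1 (XX (m + 1) n x w) = XX m n (Fin.tail x) w
  | 0, _, _ => rfl
  | n + 1, x, w => by
    simp only [XX, p1_add, L, p1_pr, XX_p1 m n]; rfl

lemma L_ct : ∀ n (y : Fin n → R) (j : Fin n) (w : Idx n → R),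
    L n y (ct n j w) + ct n j (L n y w) = y j • w
  | 0, _, j, _ => j.elim0
  | n + 1, y, j, w => by
    refine Fin.cases ?_ (fun j => ?_) j
    · apply pr_ext <;> simp [L, ct, L_zero]
    · have h1 := L_ct n (Fin.tail y) j (p1 w)
      have h2 := L_ct n (Fin.tail y) j (p2 w)
      have h3 : ∀ (r : R) u v, ct n j (r • u - v) = r • ct n j u - ct n j v := ct_lin n j
      have h4 : Fin.tail y j = y j.succ := rfl
      rw [h4] at h1 h2
      apply pr_ext <;> simp only [L, ct, p1_pr, p2_pr, Fin.cases_succ, p1_add, p2_add, p1_smul, p2_smul, h3, L_neg]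
      · exact h1
      · rw [← h2]; abel
where
  ct_lin : ∀ n (j : Fin n) (r : R) (u v : Idx n → R), ct n j (r • u - v) = r • ct n j u - ct n j v
  | 0, j, _, _, _ => j.elim0
  | n + 1, j, r, u, v => by
    refine Fin.cases ?_ (fun j => ?_) j
    · apply pr_ext <;> simp [ct]
    · apply pr_ext <;> simp only [ct, p1_pr, p2_pr, Fin.cases_succ, p1_sub, p2_sub, p1_smul, p2_smul, ct_lin n]
      module

lemma ct_zero (n) (j : Fin n) : ct n j (0 : Idx n → R) = 0 := by
  have := L_ct.ct_lin n j (1:R) 0 0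
  simpa using this

/-- multiplying a cycle by `y j` gives a boundary -/
lemma smul_cycle (n) (y : Fin n → R) (j : Fin n) (w : Idx n → R) (h : L n y w = 0) :
    y j • w = L n y (ct n j w) := by
  rw [← L_ct, h, ct_zero, add_zero]

end ops

section functor
variable {R S : Type*} [CommRing R] [CommRing S]

/-- coordinatewise additive map -/
def em (f : R →+ S) {m : ℕ} (u : Idx m → R) : Idx m → S := fun b => f (u b)

lemma em_L (f : R →+ S) : ∀ m (g : Fin m → R) (g' : Fin m → S)
    (_ : ∀ i r, f (g i * r) = g' i * f r) (u : Idx m → R), em f (L m g u) = L m g' (em f u)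
  | 0, _, _, _, _ => by funext b; simp [em, L]
  | m + 1, g, g', h, u => by
    have ih := em_L f m (Fin.tail g) (Fin.tail g') (fun i r => h i.succ r)
    apply pr_ext
    · exact ih (p1 u)
    · have := ih (p2 u)
      funext b
      have hb := congrFun this b
      simp only [em] at hb
      show f (g 0 * p1 u b - L m (Fin.tail g) (p2 u) b) = g' 0 * f (p1 u b) - L m (Fin.tail g') (em f (p2 u)) b
      rw [map_sub, h, hb]

lemma em_cst (f : R →+ S) : ∀ m (r : R), em f (cst m r) = cst m (f r)
  | 0, _ => rfl
  | m + 1, r => by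
    apply pr_ext
    · exact em_cst f m r
    · funext b; exact map_zero f

lemma em_add (f : R →+ S) {m} (u v : Idx m → R) : em f (u + v) = em f u + em f v := by
  funext b; simp [em]
lemma em_sub (f : R →+ S) {m} (u v : Idx m → R) : em f (u - v) = em f u - em f v := by
  funext b; simp [em]
lemma em_zero (f : R →+ S) {m} : em f (0 : Idx m → R) = 0 := by
  funext b; simp [em]

lemma em_XX (f : R →+ S) (m) : ∀ n (x : Fin m → Fin n → R) (x' : Fin m → Fin n → S)
    (_ : ∀ i j r, f (x i j * r) = x' i j * f r) (w : Idx n → R),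
    em f (XX m n x w) = XX m n x' (em f w)
  | 0, _, _, _, w => em_cst f m _
  | n + 1, x, x', h, w => by
    simp only [XX, em_add]
    rw [em_L f m (fun i => x i 0) (fun i => x' i 0) (fun i r => h i 0 r),
      em_XX f m n (fun i => Fin.tail (x i)) (fun i => Fin.tail (x' i)) (fun i j r => h i j.succ r),
      em_XX f m n (fun i => Fin.tail (x i)) (fun i => Fin.tail (x' i)) (fun i j r => h i j.succ r)]
    rfl
end functor

section grading
variable {R : Type*} [CommRing R]

/-- homogeneous of degree `i` -/
def Hom (i : ℤ) {m : ℕ} (u : Idx m → R) : Prop := ∀ b, (sz m b : ℤ) ≠ i → u b = 0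

/-- projection -/
def pj (i : ℤ) {m : ℕ} (u : Idx m → R) : Idx m → R := fun b => if (sz m b : ℤ) = i then u b else 0

lemma Hom_pj (i : ℤ) {m : ℕ} (u : Idx m → R) : Hom i (pj i u) := by
  intro b hb; simp [pj, hb]
lemma pj_of_Hom {i : ℤ} {m : ℕ} {u : Idx m → R} (h : Hom i u) : pj i u = u := by
  funext b; unfold pj; split_ifs with hb
  · rfl
  · exact (h b hb).symm
lemma Hom_of_pj {i : ℤ} {m : ℕ} {u : Idx m → R} (h : pj i u = u) : Hom i u := by
  rw [← h]; exact Hom_pj _ _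
lemma pj_add (i : ℤ) {m : ℕ} (u v : Idx m → R) : pj i (u + v) = pj i u + pj i v := by
  funext b; simp only [pj, Pi.add_apply]; split_ifs <;> simp
lemma pj_sub (i : ℤ) {m : ℕ} (u v : Idx m → R) : pj i (u - v) = pj i u - pj i v := by
  funext b; simp only [pj, Pi.sub_apply]; split_ifs <;> simp
lemma pj_smul (i : ℤ) {m : ℕ} (r : R) (v : Idx m → R) : pj i (r • v) = r • pj i v := by
  funext b; simp only [pj, Pi.smul_apply]; split_ifs <;> simp
lemma pj_zero (i : ℤ) {m : ℕ} : pj i (0 : Idx m → R) = 0 := by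
  funext b; simp [pj]
lemma p1_pj (i : ℤ) {m : ℕ} (u : Idx (m+1) → R) : p1 (pj i u) = pj i (p1 u) := rfl
lemma p2_pj (i : ℤ) {m : ℕ} (u : Idx (m+1) → R) : p2 (pj i u) = pj (i - 1) (p2 u) := by
  funext b
  have : (sz (m + 1) (Sum.inr b) : ℤ) = sz m b + 1 := by simp [sz]
  simp only [p2, pj]
  rw [this]
  congr 1
  apply propext; constructor <;> intro h <;> omega

lemma pj_L : ∀ (i : ℤ) m (g : Fin m → R) (u : Idx m → R), pj (i + 1) (L m g u) = L m g (pj i u)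
  | i, 0, _, _ => by simp [L, pj_zero]
  | i, m + 1, g, u => by
    apply pr_ext
    · simp only [p1_pj, L, p1_pr, pj_L i m]
    · have := pj_L (i - 1) m (Fin.tail g) (p2 u)
      simp only [sub_add_cancel] at this
      simp only [p1_pj, p2_pj, L, p2_pr, pj_sub, pj_smul, add_sub_cancel_right, this]

lemma pj_cst : ∀ (i : ℤ) m (r : R), pj i (cst m r) = if i = 0 then cst m r else 0
  | i, 0, r => by
    funext b; by_cases h : i = 0
    · simp [pj, h, cst, sz]
    · simp [pj, h, sz, Ne.symm h]
  | i, m + 1, r => by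
    have := pj_cst i m r
    apply pr_ext
    · simp only [p1_pj, cst, p1_pr, this]; split_ifs <;> simp
    · simp only [p2_pj, cst, p2_pr, pj_zero]; split_ifs <;> simp

lemma pj_XX (m) : ∀ (i : ℤ) n (x : Fin m → Fin n → R) (w : Idx n → R),
    pj i (XX m n x w) = XX m n x (pj i w)
  | i, 0, x, w => by
    show pj i (cst m (w ())) = cst m (pj i w ())
    rw [pj_cst]
    by_cases h : i = 0
    · rw [if_pos h]; congr 1; simp [pj, h, sz]
    · have h' : pj i w () = 0 := by
        have h2 : ¬ ((0 : ℕ) : ℤ) = i := by simpa using Ne.symm h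
        exact if_neg h2
      rw [if_neg h, h']
      have := cst_smul m (0 : R) 0
      simpa using this.symm
  | i, n + 1, x, w => by
    simp only [XX, pj_add, p1_pj, p2_pj, pj_XX m i n]
    have := pj_L (i - 1) m (fun i => x i 0) (XX m n (fun i => Fin.tail (x i)) (p2 w))
    simp only [sub_add_cancel] at this
    rw [this, pj_XX m (i - 1) n]

lemma Hom_L {i : ℤ} {m} (g : Fin m → R) {u : Idx m → R} (h : Hom i u) : Hom (i + 1) (L m g u) := by
  apply Hom_of_pj; rw [pj_L, pj_of_Hom h]
lemma Hom_XX {i : ℤ} {m n} (x : Fin m → Fin n → R) {u : Idx n → R} (h : Hom i u) :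
    Hom i (XX m n x u) := by
  apply Hom_of_pj; rw [pj_XX, pj_of_Hom h]
lemma Hom_add {i : ℤ} {m} {u v : Idx m → R} (h : Hom i u) (h' : Hom i v) : Hom i (u + v) := by
  intro b hb; simp [h b hb, h' b hb]
lemma Hom_sub {i : ℤ} {m} {u v : Idx m → R} (h : Hom i u) (h' : Hom i v) : Hom i (u - v) := by
  intro b hb; simp [h b hb, h' b hb]
lemma Hom_neg {i : ℤ} {m} {u : Idx m → R} (h : Hom i u) : Hom i (-u) := by
  intro b hb; simp [h b hb]
lemma Hom_zero {i : ℤ} {m} : Hom i (0 : Idx m → R) := fun _ _ => rfl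
lemma Hom_p1 {i : ℤ} {m} {u : Idx (m + 1) → R} (h : Hom i u) : Hom i (p1 u) := by
  apply Hom_of_pj; rw [← p1_pj, pj_of_Hom h]
lemma Hom_p2 {i : ℤ} {m} {u : Idx (m + 1) → R} (h : Hom i u) : Hom (i - 1) (p2 u) := by
  apply Hom_of_pj; rw [← p2_pj, pj_of_Hom h]
lemma Hom_em {S : Type*} [CommRing S] (f : R →+ S) {i : ℤ} {m} {u : Idx m → R} (h : Hom i u) :
    Hom i (em f u) := by
  intro b hb; simp [em, h b hb]

lemma sz_le : ∀ m (b : Idx m), sz m b ≤ m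
  | 0, _ => le_rfl
  | m + 1, Sum.inl b => (sz_le m b).trans (Nat.le_succ _)
  | m + 1, Sum.inr b => Nat.succ_le_succ (sz_le m b)

lemma sz_tp : ∀ m, sz m (tp m) = m
  | 0 => rfl
  | m + 1 => congrArg (· + 1) (sz_tp m)

lemma eq_tp : ∀ m (b : Idx m), sz m b = m → b = tp m
  | 0, _, _ => rfl
  | m + 1, Sum.inl b, h => by
    have h1 := sz_le m b
    have h2 : sz m b = m + 1 := h
    omega
  | m + 1, Sum.inr b, h => by
    have h2 : sz m b + 1 = m + 1 := h
    have := eq_tp m b (by omega)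
    rw [this]; rfl

lemma Hom_big {i : ℤ} {m} {u : Idx m → R} (h : Hom i u) (hi : (m : ℤ) < i) : u = 0 := by
  funext b; apply h; have := sz_le m b; omega
lemma Hom_small {i : ℤ} {m} {u : Idx m → R} (h : Hom i u) (hi : i < 0) : u = 0 := by
  funext b; apply h; omega
lemma Hom_top_ext {m} {u v : Idx m → R} (h : Hom m u) (h' : Hom m v) (e : u (tp m) = v (tp m)) :
    u = v := by
  funext b
  by_cases hb : sz m b = m
  · rw [eq_tp m b hb, e]
  · rw [h b (by exact_mod_cast hb), h' b (by exact_mod_cast hb)]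

lemma Hom0_cst : ∀ m {u : Idx m → R} (_ : Hom 0 u), ∃ r, u = cst m r
  | 0, u, _ => ⟨u (), rfl⟩
  | m + 1, u, h => by
    obtain ⟨r, hr⟩ := Hom0_cst m (Hom_p1 h)
    refine ⟨r, pr_ext ?_ ?_⟩
    · simpa [cst] using hr
    · simpa [cst] using Hom_small (Hom_p2 h) (by norm_num)

lemma XX_cst (m) : ∀ n (x : Fin m → Fin n → R) (r : R), XX m n x (cst n r) = cst m r
  | 0, _, _ => rfl
  | n + 1, x, r => by simp [XX, cst, XX_zero, L_zero, XX_cst m n]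

lemma L_mem (J : Ideal R) : ∀ m (g : Fin m → R) (_ : ∀ i, g i ∈ J) (u : Idx m → R) b,
    L m g u b ∈ J
  | 0, _, _, _, _ => J.zero_mem
  | m + 1, g, h, u, Sum.inl b => L_mem J m (Fin.tail g) (fun i => h i.succ) (p1 u) b
  | m + 1, g, h, u, Sum.inr b => by
    have := L_mem J m (Fin.tail g) (fun i => h i.succ) (p2 u) b
    exact J.sub_mem (J.mul_mem_right _ (h 0)) this

lemma XX_mem (J : Ideal R) (m) : ∀ n (x : Fin m → Fin n → R) (_ : ∀ i j, x i j ∈ J) (i : ℤ)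
    (_ : 0 < i) (w : Idx n → R) (_ : Hom i w) b, XX m n x w b ∈ J
  | 0, x, h, i, hi, w, hw, b => by
    rw [Hom_big hw (by simpa using hi), XX_zero]; exact J.zero_mem
  | n + 1, x, h, i, hi, w, hw, b => by
    exact J.add_mem (XX_mem J m n _ (fun i j => h i j.succ) i hi _ (Hom_p1 hw) b)
      (L_mem J m _ (fun i => h i 0) _ b)

lemma span_top : ∀ m (g c : Fin m → R), ∃ u, L m g u (tp m) = ∑ i, c i * g i
  | 0, _, _ => ⟨0, by simp [L]⟩
  | m + 1, g, c => by
    obtain ⟨v, hv⟩ := span_top m (Fin.tail g) (fun i => - c i.succ)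
    refine ⟨pr (fun _ => c 0) v, ?_⟩
    show g 0 * c 0 - L m (Fin.tail g) v (tp m) = _
    rw [hv, Fin.sum_univ_succ]
    simp [Fin.tail]; ring

/-- top degree elements whose coefficient lies in the ideal are boundaries -/
lemma top_bdry (m) (g : Fin m → R) (u : Idx m → R) (hu : Hom m u)
    (h : u (tp m) ∈ Ideal.span (Set.range g)) : ∃ v, Hom (m - 1) v ∧ u = L m g v := by
  obtain ⟨c, hc⟩ := (Submodule.mem_span_range_iff_exists_fun R).1 h
  obtain ⟨v, hv⟩ := span_top m g c
  refine ⟨pj (m - 1) v, Hom_pj _ _, ?_⟩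
  have h1 := pj_L ((m : ℤ) - 1) m g v
  rw [sub_add_cancel] at h1
  rw [← h1]
  apply Hom_top_ext hu (Hom_pj _ _)
  simp only [pj, sz_tp, if_true, hv, ← hc, smul_eq_mul]

/-- regular sequences, in the order in which they are used here -/
def Reg : ∀ n, (Fin n → R) → Prop
  | 0, _ => True
  | n + 1, y => Reg n (Fin.tail y) ∧ ∀ c, y 0 * c ∈ Ideal.span (Set.range (Fin.tail y)) →
      c ∈ Ideal.span (Set.range (Fin.tail y))

lemma kos_exact : ∀ n (y : Fin n → R) (_ : Reg n y) (i : ℤ) (_ : i < n) (w : Idx n → R)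
    (_ : Hom i w) (_ : L n y w = 0), ∃ v, Hom (i - 1) v ∧ w = L n y v
  | 0, y, _, i, hi, w, hw, _ => ⟨0, Hom_zero, by rw [L_zero]; exact Hom_small hw (by simpa using hi)⟩
  | n + 1, y, hy, i, hi, w, hw, hz => by
    have h1 : L n (Fin.tail y) (p1 w) = 0 := congrArg p1 hz
    have h2 : y 0 • p1 w - L n (Fin.tail y) (p2 w) = 0 := congrArg p2 hz
    have key : ∃ s, Hom (i - 1) s ∧ p1 w = L n (Fin.tail y) s := by
      by_cases hin : i < n
      · exact kos_exact n _ hy.1 i hin _ (Hom_p1 hw) h1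
      · have : i = n := by push_cast at hi; omega
        subst this
        apply top_bdry n _ _ (Hom_p1 hw)
        apply hy.2
        have h3 := congrFun (sub_eq_zero.1 h2) (tp n)
        simp only [Pi.smul_apply, smul_eq_mul] at h3
        rw [h3]
        exact L_mem _ _ _ (fun i => Ideal.subset_span (Set.mem_range_self i)) _ _
    obtain ⟨s, hs, hs'⟩ := key
    have h3 : L n (Fin.tail y) (p2 w - y 0 • s) = 0 := by
      rw [L_sub, L_smul, ← hs', ← neg_sub, h2, neg_zero]
    have hh : Hom (i - 1) (p2 w - y 0 • s) := by
      apply Hom_of_pj; rw [pj_sub, pj_smul, pj_of_Hom hs, pj_of_Hom (Hom_p2 hw)]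
    obtain ⟨t, ht, ht'⟩ := kos_exact n _ hy.1 (i - 1) (by push_cast at hi; omega) _ hh h3
    refine ⟨pr s (-t), ?_, ?_⟩
    · intro b hb
      rcases b with b | b
      · exact hs b hb
      · have : t b = 0 := ht b (by
          have e : (sz (n + 1) (Sum.inr b) : ℤ) = sz n b + 1 := by simp [sz]
          rw [e] at hb
          intro h; apply hb; omega)
        show - t b = 0
        rw [this, neg_zero]
    · rw [L_pr, ← hs', L_neg, ← ht']
      apply pr_ext
      · simp
      · simp
end grading

end BettiAux

namespace BettiAux
universe u

section generic

/-- `z` is a family of independent polynomial variables generating `R` over some base ring -/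
def Gen {τ : Type} (R : Type u) [CommRing R] (z : τ → R) : Prop :=
  ∃ (B : Type u) (_ : CommRing B) (e : MvPolynomial τ B ≃+* R), ∀ t, e (X t) = z t

lemma gen_sub {σ τ : Type} {R : Type u} [CommRing R] {z : σ → R} (h : Gen R z) (ι : τ → σ)
    (hι : Function.Injective ι) : Gen R (fun t => z (ι t)) := by
  classical
  obtain ⟨B, _, e, he⟩ := h
  let ρ := ((Set.range ι)ᶜ : Set σ)
  let q : τ ⊕ ρ ≃ σ := ((Equiv.ofInjective ι hι).sumCongr (Equiv.refl _)).trans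
    (Equiv.Set.sumCompl (Set.range ι))
  refine ⟨MvPolynomial ρ B, inferInstance,
    ((sumRingEquiv B τ ρ).symm.trans (renameEquiv B q).toRingEquiv).trans e, fun t => ?_⟩
  show _ = z (ι t)
  rw [← he]
  simp only [q, RingEquiv.trans_apply, sumRingEquiv_symm_X]
  simp
  rfl

lemma gen_opt {τ : Type} {R : Type u} [CommRing R] {z : Option τ → R} (h : Gen R z) :
    ∃ (A : Type u) (_ : CommRing A) (e : Polynomial A ≃+* R) (z' : τ → A),
      e Polynomial.X = z none ∧ (∀ a, e (Polynomial.C (z' a)) = z (some a)) ∧ Gen A z' := by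
  obtain ⟨B, _, e, he⟩ := h
  refine ⟨MvPolynomial τ B, inferInstance, (optionEquivLeft B τ).symm.toRingEquiv.trans e,
    fun t => X t, ?_, ?_, ⟨B, inferInstance, RingEquiv.refl _, fun t => rfl⟩⟩
  · rw [← he, ← optionEquivLeft_X_none]
    show e ((optionEquivLeft B τ).symm _) = _
    rw [AlgEquiv.symm_apply_apply]
  · intro a
    rw [← he, ← optionEquivLeft_X_some]
    show e ((optionEquivLeft B τ).symm _) = _
    rw [AlgEquiv.symm_apply_apply]

lemma gen_kill {σ : Type} {R : Type u} [CommRing R] {z : σ → R} (h : Gen R z) (T : Set σ) :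
    ∃ ρ : R →+* R, (∀ s ∈ T, ρ (z s) = 0) ∧ (∀ s ∉ T, ρ (z s) = z s) ∧
      ∀ r, r - ρ r ∈ Ideal.span (z '' T) := by
  classical
  obtain ⟨B, _, e, he⟩ := h
  let f : MvPolynomial σ B →+* R :=
    eval₂Hom ((e : MvPolynomial σ B →+* R).comp C) (fun s => if s ∈ T then 0 else z s)
  have hf : ∀ s, f (X s) = if s ∈ T then 0 else z s := fun s => by simp [f]
  have hC : ∀ b, f (C b) = e (C b) := fun b => by simp [f]
  have key : ∀ p, e p - f p ∈ Ideal.span (z '' T) := by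
    intro p
    induction p using MvPolynomial.induction_on with
    | C a => rw [hC, sub_self]; exact Ideal.zero_mem _
    | add p q hp hq =>
      rw [map_add, map_add, add_sub_add_comm]; exact Ideal.add_mem _ hp hq
    | mul_X p s hp =>
      rw [map_mul, map_mul, he, hf]
      split_ifs with hs
      · rw [mul_zero, sub_zero]
        exact Ideal.mul_mem_left _ _ (Ideal.subset_span ⟨s, hs, rfl⟩)
      · rw [← sub_mul]; exact Ideal.mul_mem_right _ _ hp
  have hz : ∀ s, e.symm (z s) = X s := fun s => by rw [← he, e.symm_apply_apply]
  refine ⟨f.comp (e.symm : R →+* MvPolynomial σ B), ?_, ?_, ?_⟩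
  · intro s hs; simp [hz, hf, hs]
  · intro s hs; simp [hz, hf, hs]
  · intro r
    have := key (e.symm r)
    rwa [e.apply_symm_apply] at this

lemma gen_nzd {σ : Type} {R : Type u} [CommRing R] {z : σ → R} (h : Gen R z) (s : σ) (r : R)
    (hr : z s * r = 0) : r = 0 := by
  obtain ⟨B, _, e, he⟩ := h
  have h1 : X s * e.symm r = 0 := by
    rw [← e.symm_apply_apply (X s), he, ← map_mul, hr, map_zero]
  have h2 : e.symm r = 0 := (isRegular_X (n := s)).left (by simpa using h1)
  simpa using h2

lemma gen_reg : ∀ n {R : Type u} [CommRing R] {y : Fin n → R} (_ : Gen R y), Reg n y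
  | 0, _, _, _, _ => trivial
  | n + 1, R, _, y, h => by
    refine ⟨gen_reg n (gen_sub h Fin.succ (Fin.succ_injective n)), fun c hc => ?_⟩
    obtain ⟨ρ, h1, h2, h3⟩ := gen_kill h (Set.range Fin.succ)
    have e : y '' Set.range Fin.succ = Set.range (Fin.tail y) := by
      rw [← Set.range_comp]; rfl
    rw [e] at h3
    have h4 : ∀ a ∈ Ideal.span (Set.range (Fin.tail y)), ρ a = 0 := by
      intro a ha
      have : Ideal.span (Set.range (Fin.tail y)) ≤ RingHom.ker ρ := by
        rw [Ideal.span_le]; rintro _ ⟨j, rfl⟩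
        exact h1 j.succ ⟨j, rfl⟩
      exact this ha
    have h5 := h4 _ hc
    rw [map_mul, h2 0 (by simp)] at h5
    have h6 := h3 c
    rwa [gen_nzd h 0 _ h5, sub_zero] at h6

end generic

/-- the entries of the product `X Y` -/
def gv {R : Type*} [CommRing R] {m n : ℕ} (x : Fin m → Fin n → R) (y : Fin n → R) : Fin m → R :=
  fun i => ∑ j, x i j * y j

/-- all variables as a single family -/
def xy {R : Type*} {m n : ℕ} (x : Fin m → Fin n → R) (y : Fin n → R) :
    (Fin m × Fin n) ⊕ Fin n → R := Sum.elim (fun p => x p.1 p.2) y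

/-- surjectivity of the comparison map on cohomology below degree `m` -/
def Claim (m n : ℕ) : Prop := ∀ (R : Type u) [CommRing R] (x : Fin m → Fin n → R) (y : Fin n → R),
  Gen R (xy x y) → ∀ i : ℤ, i < m → ∀ u, Hom i u → L m (gv x y) u = 0 →
    ∃ s w, L n y w = 0 ∧ u = L m (gv x y) s + XX m n x w

lemma gv_map {R S : Type*} [CommRing R] [CommRing S] (f : R →+* S) {m n : ℕ}
    (x : Fin m → Fin n → R) (y : Fin n → R) (i) :
    f (gv x y i) = gv (fun i j => f (x i j)) (fun j => f (y j)) i := by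
  simp [gv]

lemma smul_em {R S : Type*} [CommRing R] [CommRing S] (f : R →+* S) {m : ℕ} (r : R)
    (u : Idx m → R) : em (f : R →+ S) (r • u) = f r • em (f : R →+ S) u := by
  funext b; simp [em]

lemma grade {R : Type*} [CommRing R] {m n : ℕ} {x : Fin m → Fin n → R} {y : Fin n → R}
    {g : Fin m → R} {i : ℤ} {u : Idx m → R} (hu : Hom i u) {s w} (hw : L n y w = 0)
    (h : u = L m g s + XX m n x w) :
    ∃ s w, Hom (i - 1) s ∧ Hom i w ∧ L n y w = 0 ∧ u = L m g s + XX m n x w := by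
  refine ⟨pj (i - 1) s, pj i w, Hom_pj _ _, Hom_pj _ _, ?_, ?_⟩
  · rw [← pj_L, hw, pj_zero]
  · rw [← pj_L, sub_add_cancel, ← pj_XX, ← pj_add, ← h, pj_of_Hom hu]

lemma col_step {m n : ℕ} (hc : Claim.{u} m n) {R : Type u} [CommRing R]
    (x : Fin m → Fin (n + 1) → R) (y : Fin (n + 1) → R) (hg : Gen R (xy x y)) (i : ℤ) (hi : i ≤ m)
    (f : Idx m → R) (hf : Hom i f) (a : Idx m → R) (ha : y 0 • f = L m (gv x y) a) :
    ∃ s w, L (n + 1) y w = 0 ∧ f = L m (gv x y) s + XX m (n + 1) x w := by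
  -- reduce to homogeneous `a`
  wlog hah : Hom (i - 1) a generalizing a
  · refine this (pj (i - 1) a) ?_ (Hom_pj _ _)
    rw [← pj_L, ← ha, sub_add_cancel, pj_smul, pj_of_Hom hf]
  have nzd : ∀ {k : ℕ} (v : Idx k → R), y 0 • v = 0 → v = 0 := by
    intro k v hv; funext b
    exact gen_nzd hg (Sum.inr 0) _ (congrFun hv b)
  let κ : Option ((Fin m × Fin n) ⊕ Fin n) → (Fin m × Fin (n + 1)) ⊕ Fin (n + 1) := fun o =>
    o.elim (Sum.inr 0) (Sum.map (fun p => (p.1, p.2.succ)) Fin.succ)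
  have hκ : Function.Injective κ := by
    rintro (_ | ⟨a, b⟩ | a) (_ | ⟨c, d⟩ | c) h <;> simp [κ, Fin.succ_ne_zero] at h ⊢
    · exact (Fin.succ_ne_zero _ h.symm).elim
    · exact h
    · exact h
  obtain ⟨A, _, e, z', h1, h2, h3⟩ := gen_opt (gen_sub hg κ hκ)
  let π : R →+* A := (Polynomial.evalRingHom 0).comp (e.symm : R →+* Polynomial A)
  have hπ0 : π (y 0) = 0 := by
    have : e.symm (y 0) = Polynomial.X := by rw [e.symm_apply_eq, h1]; rfl
    simp [π, this]
  have hπs : ∀ a, π (xy x y (κ (some a))) = z' a := by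
    intro a
    have : e.symm (xy x y (κ (some a))) = Polynomial.C (z' a) := by rw [e.symm_apply_eq, h2]
    simp [π, this]
  have hπsurj : ∀ a, ∃ r, π r = a := fun a => ⟨e (Polynomial.C a), by simp [π]⟩
  have hπker : ∀ r, π r = 0 → ∃ r', r = y 0 * r' := by
    intro r hr
    have h4 : (e.symm r).coeff 0 = 0 := by
      rw [Polynomial.coeff_zero_eq_eval_zero]; simpa [π] using hr
    obtain ⟨q, hq⟩ := Polynomial.X_dvd_iff.2 h4
    refine ⟨e q, ?_⟩
    have := congrArg e hq
    rw [e.apply_symm_apply, map_mul, h1] at this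
    exact this
  have liftv : ∀ {k : ℕ} (v : Idx k → A), ∃ v' : Idx k → R, em (π : R →+ A) v' = v := by
    intro k v
    choose v' hv' using fun b => hπsurj (v b)
    exact ⟨v', funext hv'⟩
  have kerv : ∀ {k : ℕ} (v : Idx k → R), em (π : R →+ A) v = 0 → ∃ v', v = y 0 • v' := by
    intro k v hv
    choose v' hv' using fun b => hπker (v b) (congrFun hv b)
    exact ⟨v', funext hv'⟩
  let x' : Fin m → Fin n → A := fun i j => z' (Sum.inl (i, j))
  let y' : Fin n → A := fun j => z' (Sum.inr j)
  have hx' : ∀ i j, π (x i j.succ) = x' i j := fun i j => hπs (Sum.inl (i, j))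
  have hy' : ∀ j, π (y j.succ) = y' j := fun j => hπs (Sum.inr j)
  have hG : Gen A (xy x' y') := by
    have : xy x' y' = z' := by funext t; rcases t with t | t <;> rfl
    rwa [this]
  have hgv : ∀ i, π (gv x y i) = gv x' y' i := by
    intro i
    show π (∑ j, x i j * y j) = ∑ j, x' i j * y' j
    rw [Fin.sum_univ_succ, map_add, map_mul, hπ0, mul_zero, zero_add, map_sum]
    exact Finset.sum_congr rfl (fun j _ => by rw [map_mul, hx', hy'])
  have eL : ∀ v, em (π : R →+ A) (L m (gv x y) v) = L m (gv x' y') (em (π : R →+ A) v) :=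
    em_L _ _ _ _ (fun i r => by
      show π _ = _ * π r
      rw [map_mul, hgv])
  have eY : ∀ v, em (π : R →+ A) (L n (Fin.tail y) v) = L n y' (em (π : R →+ A) v) :=
    em_L _ _ _ _ (fun i r => by
      show π _ = _ * π r
      rw [map_mul]; congr 1; exact hy' i)
  have eX : ∀ v, em (π : R →+ A) (XX m n (fun i => Fin.tail (x i)) v) =
      XX m n x' (em (π : R →+ A) v) :=
    em_XX _ _ _ _ _ (fun i j r => by
      show π _ = _ * π r
      rw [map_mul]; congr 1; exact hx' i j)
  obtain ⟨s', w', hw', ha'⟩ := hc A x' y' hG (i - 1) (by omega) (em (π : R →+ A) a) (Hom_em _ hah) (by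
    rw [← eL, ← ha, smul_em, hπ0, zero_smul])
  obtain ⟨s, rfl⟩ := liftv s'
  obtain ⟨w0, rfl⟩ := liftv w'
  obtain ⟨w1, hw1⟩ := kerv (L n (Fin.tail y) w0) (by rw [eY, hw'])
  obtain ⟨b, hb⟩ := kerv (a - (L m (gv x y) s + XX m n (fun i => Fin.tail (x i)) w0)) (by
    rw [em_sub, em_add, eL, eX, ha', sub_self])
  have hX0 : XX m (n + 1) x (pr w0 0) = XX m n (fun i => Fin.tail (x i)) w0 := by
    simp [XX, XX_zero, L_zero]
  have hLw : L (n + 1) y (pr w0 0) = y 0 • pr w1 w0 := by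
    rw [L_pr, hw1, L_zero, sub_zero]; apply pr_ext <;> simp
  refine ⟨b, pr w1 w0, ?_, ?_⟩
  · apply nzd
    rw [← L_smul, ← hLw, L_sq]
  · rw [← sub_eq_zero]
    apply nzd
    have ha2 : a = y 0 • b + (L m (gv x y) s + XX m (n + 1) x (pr w0 0)) := by
      rw [hX0, ← hb]; abel
    rw [smul_sub, ha, smul_add, ← XX_smul, ← hLw, XX_L, ← L_smul]
    nth_rewrite 1 [ha2]
    rw [L_add, L_add, L_sq, zero_add]
    exact sub_self _

lemma gv_smul {R : Type*} [CommRing R] {m n : ℕ} (x : Fin m → Fin n → R) (y : Fin n → R)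
    (x0 : Fin n → R) (w : Idx n → R) (hw : L n y w = 0) :
    ∃ v, (∑ j, x0 j * y j) • XX m n x w = L m (gv x y) v := by
  have h1 : ∀ S : Finset (Fin n), ∃ v, (∑ j ∈ S, x0 j * y j) • w = L n y v := by
    classical
    intro S
    induction S using Finset.induction_on with
    | empty => exact ⟨0, by simp [L_zero]⟩
    | insert j S hj ih =>
      obtain ⟨v, hv⟩ := ih
      refine ⟨x0 j • ct n j w + v, ?_⟩
      rw [Finset.sum_insert hj, add_smul, hv, L_add, L_smul, ← smul_cycle n y j w hw, mul_smul]
  obtain ⟨v, hv⟩ := h1 Finset.univ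
  exact ⟨XX m n x v, by rw [← XX_smul, hv, XX_L]; rfl⟩

lemma t_step {m n : ℕ} (hc : Claim.{u} m n) {R : Type u} [CommRing R]
    (x : Fin (m + 1) → Fin (n + 1) → R) (y : Fin (n + 1) → R) (hg : Gen R (xy x y))
    (i : ℤ) (hi : i ≤ m) (u : Idx m → R) (hu : Hom i u) (a : Idx m → R)
    (ha : gv x y 0 • u = L m (gv (Fin.tail x) y) a) :
    ∃ s w, L (n + 1) y w = 0 ∧ u = L m (gv (Fin.tail x) y) s + XX m (n + 1) (Fin.tail x) w := by
  let κ : Option (((Fin m × Fin (n + 1)) ⊕ Fin (n + 1)) ⊕ Fin n) →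
      (Fin (m + 1) × Fin (n + 1)) ⊕ Fin (n + 1) := fun o =>
    o.elim (Sum.inl (0, 0))
      (Sum.elim (Sum.map (fun p => (p.1.succ, p.2)) id) (fun j => Sum.inl (0, j.succ)))
  have hκ : Function.Injective κ := by
    rintro (_ | (⟨a, b⟩ | a) | a) (_ | (⟨c, d⟩ | c) | c) h <;> simp [κ] at h ⊢
    all_goals first
      | exact h
      | exact Fin.succ_ne_zero _ h.1
      | exact Fin.succ_ne_zero _ h.1.symm
      | exact Fin.succ_ne_zero _ h.symm
  obtain ⟨A, _, e, z', h1, h2, h3⟩ := gen_opt (gen_sub hg κ hκ)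
  let ι : A →+* R := (e : Polynomial A →+* R).comp Polynomial.C
  let co : ℕ → R →+ A := fun d => ((Polynomial.lcoeff A d).toAddMonoidHom).comp
    (e.symm : R →+* Polynomial A).toAddMonoidHom
  have co_def : ∀ d r, co d r = (e.symm r).coeff d := fun d r => rfl
  have co_mul : ∀ d b r, co d (ι b * r) = b * co d r := by
    intro d b r; simp [co_def, ι]
  have hx00 : e.symm (x 0 0) = Polynomial.X := by rw [e.symm_apply_eq, h1]; rfl
  have co_t : ∀ d r, co (d + 1) (x 0 0 * r) = co d r := by
    intro d r; simp [co_def, hx00]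
  have co_tp : ∀ d N b, co d (x 0 0 ^ N * ι b) = if d = N then b else 0 := by
    intro d N b
    simp [co_def, hx00, ι]
  let x' : Fin m → Fin (n + 1) → A := fun i j => z' (Sum.inl (Sum.inl (i, j)))
  let y' : Fin (n + 1) → A := fun j => z' (Sum.inl (Sum.inr j))
  let h' : Fin n → A := fun j => z' (Sum.inr j)
  have hx' : ∀ i j, x (Fin.succ i) j = ι (x' i j) := fun i j => (h2 (Sum.inl (Sum.inl (i, j)))).symm
  have hy' : ∀ j, y j = ι (y' j) := fun j => (h2 (Sum.inl (Sum.inr j))).symm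
  have hh' : ∀ j, x 0 (Fin.succ j) = ι (h' j) := fun j => (h2 (Sum.inr j)).symm
  have hG : Gen A (xy x' y') := by
    have := gen_sub h3 Sum.inl Sum.inl_injective
    have e : xy x' y' = fun t => z' (Sum.inl t) := by funext t; rcases t with t | t <;> rfl
    rwa [e]
  have hgv : ∀ i, gv (Fin.tail x) y i = ι (gv x' y' i) := by
    intro i
    simp only [gv, map_sum, map_mul, ← hx', ← hy']; rfl
  let h0 : A := ∑ j, h' j * y' j.succ
  have hg0 : gv x y 0 = ι (y' 0) * x 0 0 + ι h0 := by
    simp only [gv, Fin.sum_univ_succ, h0, map_sum, map_mul, ← hh', ← hy']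
    ring
  have coL : ∀ d v, em (co d) (L m (gv (Fin.tail x) y) v) = L m (gv x' y') (em (co d) v) :=
    fun d => em_L _ _ _ _ (fun i r => by rw [hgv, co_mul])
  have ιL : ∀ v, em (ι : A →+ R) (L m (gv x' y') v) = L m (gv (Fin.tail x) y) (em (ι : A →+ R) v) :=
    em_L _ _ _ _ (fun i r => by
      show ι _ = _ * ι r
      rw [map_mul, hgv])
  have ιY : ∀ v, em (ι : A →+ R) (L (n + 1) y' v) = L (n + 1) y (em (ι : A →+ R) v) :=
    em_L _ _ _ _ (fun i r => by
      show ι _ = _ * ι r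
      rw [map_mul, hy'])
  have ιX : ∀ v, em (ι : A →+ R) (XX m (n + 1) x' v) =
      XX m (n + 1) (Fin.tail x) (em (ι : A →+ R) v) :=
    em_XX _ _ _ _ _ (fun i j r => by
      show ι _ = _ * ι r
      rw [map_mul, ← hx']; rfl)
  have main : ∀ (N : ℕ) (u : Idx m → R), (∀ d ≥ N, em (co d) u = 0) → Hom i u →
      (∃ a, gv x y 0 • u = L m (gv (Fin.tail x) y) a) →
      ∃ s w, L (n + 1) y w = 0 ∧
        u = L m (gv (Fin.tail x) y) s + XX m (n + 1) (Fin.tail x) w := by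
    intro N
    induction N with
    | zero =>
      intro u hN _ _
      refine ⟨0, 0, L_zero _ _, ?_⟩
      rw [L_zero, XX_zero, add_zero]
      funext b
      have : e.symm (u b) = 0 := by
        ext d; exact congrFun (hN d (Nat.zero_le _)) b
      simpa using this
    | succ N ih =>
      rintro u hN hu ⟨a, ha⟩
      have hk : y' 0 • em (co N) u = L m (gv x' y') (em (co (N + 1)) a) := by
        rw [← coL, ← ha]
        funext b
        have hz : co (N + 1) (u b) = 0 := congrFun (hN (N + 1) le_rfl) b
        show y' 0 * co N (u b) = co (N + 1) (gv x y 0 * u b)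
        rw [hg0, add_mul, map_add, co_mul, hz, mul_zero, add_zero, mul_assoc, co_mul, co_t]
      obtain ⟨s', w', hw', hs'⟩ := col_step hc x' y' hG i hi _ (Hom_em _ hu) _ hk
      have hs1 := congrArg (em (ι : A →+ R)) hs'
      rw [em_add, ιL, ιX] at hs1
      have hw1 : L (n + 1) y (em (ι : A →+ R) w') = 0 := by rw [← ιY, hw', em_zero]
      obtain ⟨v, hv⟩ := gv_smul (Fin.tail x) y (x 0) _ hw1
      have f1 : ∀ d ≥ N, em (co d) (u - x 0 0 ^ N • em (ι : A →+ R) (em (co N) u)) = 0 := by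
        intro d hd
        rw [em_sub]
        funext b
        show co d (u b) - co d (x 0 0 ^ N * ι (co N (u b))) = 0
        rw [co_tp]
        split_ifs with hdN
        · rw [hdN, sub_self]
        · have : co d (u b) = 0 := congrFun (hN d (by omega)) b
          rw [this, sub_zero]
      have f2 : Hom i (u - x 0 0 ^ N • em (ι : A →+ R) (em (co N) u)) := by
        apply Hom_of_pj
        rw [pj_sub, pj_smul, pj_of_Hom hu, pj_of_Hom (Hom_em _ (Hom_em _ hu))]
      have f3 : ∃ a, gv x y 0 • (u - x 0 0 ^ N • em (ι : A →+ R) (em (co N) u)) = L m (gv (Fin.tail x) y) a := by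
        refine ⟨a - x 0 0 ^ N • (gv x y 0 • em (ι : A →+ R) s' + v), ?_⟩
        rw [smul_sub, ha, smul_comm, hs1, smul_add, L_sub, L_smul, L_add, L_smul, ← hv]
        rfl
      obtain ⟨s, w, hw, hs⟩ := ih _ f1 f2 f3
      refine ⟨s + x 0 0 ^ N • em (ι : A →+ R) s', w + x 0 0 ^ N • em (ι : A →+ R) w', ?_, ?_⟩
      · rw [L_add, L_smul, hw, hw1, smul_zero, add_zero]
      · rw [sub_eq_iff_eq_add.1 hs, hs1, L_add, L_smul, XX_add, XX_smul]
        module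
  refine main (Finset.univ.sup (fun b => (e.symm (u b)).natDegree + 1)) u ?_ hu ⟨a, ha⟩
  intro d hd
  funext b
  have h4 : (e.symm (u b)).natDegree + 1 ≤ d :=
    (Finset.le_sup (f := fun b => (e.symm (u b)).natDegree + 1) (Finset.mem_univ b)).trans hd
  have h5 : (e.symm (u b)).natDegree < d := by omega
  exact Polynomial.coeff_eq_zero_of_natDegree_lt h5

lemma row_step {m n : ℕ} (hmn : m ≤ n + 1) (hc : Claim.{u} m n) (hc' : Claim.{u} m (n + 1)) :
    Claim.{u} (m + 1) (n + 1) := by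
  intro R _ x y hg i hi U hU hz
  have htail : Fin.tail (gv x y) = gv (Fin.tail x) y := rfl
  have h1 : L m (gv (Fin.tail x) y) (p1 U) = 0 := congrArg p1 hz
  have h2 : gv x y 0 • p1 U - L m (gv (Fin.tail x) y) (p2 U) = 0 := congrArg p2 hz
  obtain ⟨s, w, hw, hs⟩ := t_step hc x y hg i (by push_cast at hi; omega) (p1 U) (Hom_p1 hU) (p2 U)
    (sub_eq_zero.1 h2)
  obtain ⟨s, w, hsH, hwH, hw, hs⟩ := grade (Hom_p1 hU) hw hs
  let U1 := U - L (m + 1) (gv x y) (pr s 0) - XX (m + 1) (n + 1) x w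
  have hU1 : p1 U1 = 0 := by
    simp only [U1, p1_sub, XX_p1, L_pr, p1_pr, htail, hs]; abel
  have hU1z : L (m + 1) (gv x y) U1 = 0 := by
    have : L (m + 1) (gv x y) (XX (m + 1) (n + 1) x w) = 0 := by
      have := XX_L (m + 1) (n + 1) x y w
      rw [hw, XX_zero] at this
      exact this.symm
    simp only [U1, L_sub, hz, L_sq, this, sub_zero]
  have hsH' : Hom (i - 1) (pr s 0) := by
    intro b hb
    rcases b with b | b
    · exact hsH b hb
    · rfl
  have hU1H : Hom i U1 := by
    refine Hom_sub (Hom_sub hU ?_) (Hom_XX _ hwH)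
    have := Hom_L (gv x y) hsH'
    rwa [sub_add_cancel] at this
  have h3 : L m (gv (Fin.tail x) y) (p2 U1) = 0 := by
    have : gv x y 0 • p1 U1 - L m (gv (Fin.tail x) y) (p2 U1) = 0 := congrArg p2 hU1z
    rw [hU1, smul_zero, zero_sub, neg_eq_zero] at this
    exact this
  have hG' : Gen R (xy (Fin.tail x) y) := by
    let κ : (Fin m × Fin (n + 1)) ⊕ Fin (n + 1) → (Fin (m + 1) × Fin (n + 1)) ⊕ Fin (n + 1) :=
      Sum.map (fun p => (p.1.succ, p.2)) id
    have hκ : Function.Injective κ := by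
      rintro (⟨a, b⟩ | a) (⟨c, d⟩ | c) h <;> simp [κ] at h ⊢
      · exact h
      · exact h
    have := gen_sub hg κ hκ
    have e : xy (Fin.tail x) y = fun t => xy x y (κ t) := by
      funext t; rcases t with t | t <;> rfl
    rwa [e]
  obtain ⟨s', w', hw', hs'⟩ := hc' R (Fin.tail x) y hG' (i - 1) (by push_cast at hi; omega) _
    (Hom_p2 hU1H) h3
  obtain ⟨s', w', -, hwH', hw', hs'⟩ := grade (Hom_p2 hU1H) hw' hs'
  obtain ⟨w'', -, rfl⟩ := kos_exact (n + 1) y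
    (gen_reg _ (gen_sub hg Sum.inr Sum.inr_injective)) (i - 1) (by push_cast at hi ⊢; omega) w' hwH' hw'
  rw [XX_L] at hs'
  have hs2 : p2 U1 = L m (gv (Fin.tail x) y) (s' + XX m (n + 1) (Fin.tail x) w'') := by
    rw [hs', L_add]; rfl
  refine ⟨pr s 0 - pr 0 (s' + XX m (n + 1) (Fin.tail x) w''), w, hw, ?_⟩
  have hU : U = U1 + L (m + 1) (gv x y) (pr s 0) + XX (m + 1) (n + 1) x w := by
    simp only [U1]; abel
  have hU1' : U1 = - L (m + 1) (gv x y) (pr 0 (s' + XX m (n + 1) (Fin.tail x) w'')) := by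
    rw [L_pr, htail]
    apply pr_ext
    · simp [hU1, L_zero]
    · simp [hs2]
  rw [L_sub]
  rw [hU1'] at hU
  nth_rewrite 1 [hU]
  abel

lemma claim : ∀ m n, m ≤ n + 1 → Claim.{u} m n
  | 0, n, _ => by
    intro R _ x y hg i hi u hu _
    refine ⟨0, 0, L_zero _ _, ?_⟩
    rw [L_zero, XX_zero, add_zero]
    exact Hom_small hu (by simpa using hi)
  | m + 1, 0, h => by
    obtain rfl : m = 0 := by omega
    intro R _ x y hg i hi u hu _
    refine ⟨0, fun _ => u (Sum.inl ()), rfl, ?_⟩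
    rw [L_zero]
    refine Eq.trans ?_ (zero_add _).symm
    apply pr_ext
    · rfl
    · funext b
      apply hu
      have e : (sz (0 + 1) (Sum.inr b) : ℤ) = sz 0 b + 1 := by simp [sz]
      rw [e]; push_cast at hi; omega
  | m + 1, n + 1, h => row_step (by omega) (claim m n (by omega)) (claim m (n + 1) (by omega))

end BettiAux

namespace BettiAux
universe u

/-- functions supported on `S` -/
def Supp {R ι : Type*} [CommRing R] (S : ι → Prop) (u : ι → R) : Prop := ∀ b, ¬ S b → u b = 0

lemma assemble {R M ι : Type*} [CommRing R] [AddCommGroup M] [Module R M] [Fintype ι] (m : Ideal R)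
    (d : (ι → R) →ₗ[R] (ι → R)) (S : ℕ → ι → Prop) (β : ℕ → ℕ)
    (hβ : ∀ k, Nat.card {b // S k b} = β k)
    (hd : ∀ k u, Supp (S (k + 1)) u → Supp (S k) (d u))
    (hdd : ∀ u, d (d u) = 0)
    (hmin : ∀ k u, Supp (S (k + 1)) u → ∀ b, d u b ∈ m)
    (hex : ∀ k u, Supp (S (k + 1)) u → d u = 0 → ∃ v, Supp (S (k + 2)) v ∧ d v = u)
    (ε0 : (ι → R) →ₗ[R] M) (hsurj : ∀ x, ∃ u, Supp (S 0) u ∧ ε0 u = x)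
    (hε : ∀ u, Supp (S 0) u → (ε0 u = 0 ↔ ∃ v, Supp (S 1) v ∧ d v = u)) :
    IsMinimalFreeRes m M β := by
  classical
  let e : ∀ k, {b // S k b} ≃ Fin (β k) := fun k =>
    Fintype.equivFinOfCardEq (by rw [← Nat.card_eq_fintype_card, hβ])
  let ext : ∀ k, (Fin (β k) → R) →ₗ[R] (ι → R) := fun k =>
    { toFun := fun v b => if h : S k b then v (e k ⟨b, h⟩) else 0
      map_add' := by
        intro v w; funext b; simp only [Pi.add_apply]; split_ifs <;> simp
      map_smul' := by
        intro r v; funext b; simp only [Pi.smul_apply, RingHom.id_apply]; split_ifs <;> simp }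
  let res : ∀ k, (ι → R) →ₗ[R] (Fin (β k) → R) := fun k =>
    { toFun := fun u j => u ((e k).symm j).1
      map_add' := fun _ _ => rfl
      map_smul' := fun _ _ => rfl }
  have ext_supp : ∀ k v, Supp (S k) (ext k v) := fun k v b hb => dif_neg hb
  have res_ext : ∀ k v, res k (ext k v) = v := by
    intro k v; funext j
    show (if h : S k ((e k).symm j).1 then v (e k ⟨((e k).symm j).1, h⟩) else 0) = v j
    rw [dif_pos ((e k).symm j).2]; simp
  have ext_res : ∀ k u, Supp (S k) u → ext k (res k u) = u := by
    intro k u hu; funext b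
    show (if h : S k b then u ((e k).symm (e k ⟨b, h⟩)).1 else 0) = u b
    split_ifs with h
    · simp
    · exact (hu b h).symm
  have f_zero : ∀ k v, res k (d (ext (k + 1) v)) = 0 ↔ d (ext (k + 1) v) = 0 := by
    intro k v
    constructor
    · intro h
      rw [← ext_res k _ (hd k _ (ext_supp _ v)), h, map_zero]
    · intro h; rw [h, map_zero]
  refine ⟨fun i => (res i).comp (d.comp (ext (i + 1))), ε0.comp (ext 0), ?_, ?_, ?_, ?_⟩
  · intro x
    obtain ⟨u, hu, hx⟩ := hsurj x
    exact ⟨res 0 u, by simp only [LinearMap.comp_apply, ext_res 0 u hu, hx]⟩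
  · apply Submodule.ext
    intro v
    simp only [LinearMap.mem_ker, LinearMap.mem_range, LinearMap.comp_apply]
    rw [hε _ (ext_supp 0 v)]
    constructor
    · rintro ⟨w, hw, h⟩
      exact ⟨res 1 w, by rw [ext_res 1 w hw, h, res_ext]⟩
    · rintro ⟨w, hw⟩
      exact ⟨ext 1 w, ext_supp 1 w, by rw [← hw, ext_res 0 _ (hd 0 _ (ext_supp 1 w))]⟩
  · intro i
    apply Submodule.ext
    intro v
    simp only [LinearMap.mem_ker, LinearMap.mem_range, LinearMap.comp_apply]
    rw [f_zero]
    constructor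
    · intro h
      obtain ⟨w, hw, h'⟩ := hex i _ (ext_supp _ v) h
      exact ⟨res (i + 2) w, by rw [ext_res (i + 2) w hw, h', res_ext]⟩
    · rintro ⟨w, hw⟩
      rw [← hw, ext_res (i + 1) _ (hd (i + 1) _ (ext_supp (i + 2) w)), hdd]
  · rintro i _ ⟨v, rfl⟩
    have hm : ∀ w : Fin (β i) → R, (∀ j, w j ∈ m) → w ∈ m • (⊤ : Submodule R (Fin (β i) → R)) := by
      intro w hw
      rw [pi_eq_sum_univ w]
      exact Submodule.sum_mem _ (fun j _ => Submodule.smul_mem_smul (hw j) trivial)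
    apply hm
    intro j
    exact hmin i _ (ext_supp _ v) _

section inj
lemma XX_row0 {R : Type*} [CommRing R] (m) : ∀ n (x : Fin (m + 1) → Fin n → R) (_ : ∀ j, x 0 j = 0)
    (w : Idx n → R), XX (m + 1) n x w = pr (XX m n (Fin.tail x) w) 0
  | 0, _, _, _ => rfl
  | n + 1, x, h, w => by
    have e := XX_row0 m n (fun i => Fin.tail (x i)) (fun j => h j.succ)
    simp only [XX, e, L_pr, L_zero, h]
    apply pr_ext
    · simp; rfl
    · simp

lemma XX_id {R : Type*} [CommRing R] : ∀ n (w : Idx n → R),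
    XX (n + 1) n (fun i j => if i = j.castSucc then 1 else 0) w = 0 → w = 0
  | 0, w, h => by
    funext b
    exact congrFun (congrArg p1 h) ()
  | n + 1, w, h => by
    have e := XX_row0 (n + 1) n (fun i => Fin.tail (fun j : Fin (n + 1) =>
      if i = j.castSucc then (1 : R) else 0)) (fun j => by
        simp only [Fin.tail]; rw [if_neg]
        rw [Fin.castSucc_succ]; exact (Fin.succ_ne_zero _).symm)
    have e2 : (Fin.tail fun (i : Fin (n + 1 + 1)) => Fin.tail (fun j : Fin (n + 1) =>
      if i = j.castSucc then (1 : R) else 0)) = fun i j => if i = j.castSucc then 1 else 0 := by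
      funext i j
      simp [Fin.tail, ← Fin.succ_castSucc]
    have e3 : (Fin.tail fun (i : Fin (n + 1 + 1)) =>
      if i = (0 : Fin (n + 1)).castSucc then (1 : R) else 0) = fun _ => 0 := by
      funext i; simp [Fin.tail]
    rw [e2] at e
    simp only [XX, e, L_pr, e3, L_gzero] at h
    have h1 := congrArg p1 h
    have h2 := congrArg p2 h
    simp at h1 h2
    apply pr_ext
    · exact XX_id n _ h1
    · exact XX_id n _ h2

lemma inj_of_top {R : Type*} [CommRing R] (m) : ∀ n (x : Fin m → Fin n → R)
    (Φ : (Idx m → R) → (Idx m → R)) (_ : ∀ u v, Φ (u + v) = Φ u + Φ v)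
    (_ : ∀ z u, Φ u = 0 → Φ (L m z u) = 0)
    (_ : ∀ w, Hom n w → Φ (XX m n x w) = 0 → w = 0) (w), Φ (XX m n x w) = 0 → w = 0
  | 0, x, Φ, ha, hz, ht, w, hw => by
    refine ht w (fun b hb => ?_) hw
    exact (hb rfl).elim
  | n + 1, x, Φ, ha, hz, ht, w, hw => by
    have h0 : Φ 0 = 0 := by simpa using ha 0 0
    have hneg : ∀ u, Φ u = 0 → Φ (-u) = 0 := by
      intro u hu
      have := ha u (-u)
      rwa [add_neg_cancel, h0, hu, zero_add, eq_comm] at this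
    have ih := inj_of_top m n (fun i => Fin.tail (x i)) (fun u => Φ (L m (fun i => x i 0) u))
      (fun u v => by simp only [L_add, ha])
      (fun z u hu => by
        show Φ (L m _ (L m z u)) = 0
        rw [L_anti]; exact hneg _ (hz _ _ hu))
      (fun v hv hv' => by
        have : pr 0 v = 0 := ht (pr 0 v) (by
          intro b hb
          rcases b with b | b
          · rfl
          · refine hv b ?_
            have e : (sz (n + 1) (Sum.inr b) : ℤ) = sz n b + 1 := by simp [sz]
            rw [e] at hb; push_cast at hb
            intro h; exact hb (by omega)) (by
          simpa [XX, XX_zero] using hv')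
        exact congrArg p2 this)
    have h1 : p1 w = 0 := by
      apply ih
      have := hz (fun i => x i 0) _ hw
      simpa only [XX, L_add, L_sq, add_zero] using this
    have h2 : p2 w = 0 := by
      apply ih
      simpa only [XX, h1, XX_zero, zero_add] using hw
    exact pr_ext h1 h2

lemma XX_inj {K : Type u} [Field K] (n : ℕ)
    (w : Idx n → MvPolynomial ((Fin (n + 1) × Fin n) ⊕ Fin n) K)
    (h : XX (n + 1) n (fun i j => X (Sum.inl (i, j))) w = 0) : w = 0 := by
  classical
  refine inj_of_top (n + 1) n _ id (fun _ _ => rfl) (fun z u hu => ?_) ?_ w h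
  · simp only [id] at hu ⊢
    rw [hu, L_zero]
  · intro w hw hw0
    simp only [id] at hw0
    let T : Idx n → MvPolynomial ((Fin (n + 1) × Fin n) ⊕ Fin n) K := fun b =>
      if (sz n b : ℤ) = n then 1 else 0
    have hT : w = w (tp n) • T := by
      apply Hom_top_ext hw
      · intro b hb
        have hb' : sz n b ≠ n := by exact_mod_cast hb
        simp [T, hb']
      · simp [T, sz_tp]
    by_contra hne
    have hc : w (tp n) ≠ 0 := by
      intro hc; rw [hc, zero_smul] at hT; exact hne hT
    rw [hT, XX_smul] at hw0
    have hX : XX (n + 1) n (fun i j => X (Sum.inl (i, j))) T = 0 := by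
      funext b
      have := congrFun hw0 b
      exact (mul_eq_zero.1 this).resolve_left hc
    let f : MvPolynomial ((Fin (n + 1) × Fin n) ⊕ Fin n) K →+* K :=
      eval₂Hom (RingHom.id K) (Sum.elim (fun p => if p.1 = p.2.castSucc then 1 else 0) 0)
    have h1 := em_XX (f : _ →+ K) (n + 1) n
      (fun i j => (X (Sum.inl (i, j)) : MvPolynomial ((Fin (n + 1) × Fin n) ⊕ Fin n) K))
      (fun i j => if i = j.castSucc then 1 else 0) (by
        intro i j r
        show f _ = _ * f r
        rw [map_mul]; simp [f]) T
    rw [hX, em_zero] at h1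
    have h2 := congrFun (XX_id n _ h1.symm) (tp n)
    have h3 : f (T (tp n)) = 0 := h2
    simp [T, sz_tp] at h3
end inj

lemma cnt : ∀ m k, (∑ b : Idx m, if sz m b = k then 1 else 0) = m.choose k
  | 0, k => by
    show (∑ b : Unit, if 0 = k then 1 else 0) = _
    rcases k with _ | k <;> simp
  | m + 1, k => by
    show (∑ b : Idx m ⊕ Idx m, if Sum.elim (sz m) (fun c => sz m c + 1) b = k then 1 else 0) = _
    rw [Fintype.sum_sum_type]
    show (∑ b : Idx m, if sz m b = k then 1 else 0) +
      (∑ b : Idx m, if sz m b + 1 = k then 1 else 0) = _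
    rw [cnt m k]
    rcases k with _ | k
    · simp
    · simp only [Nat.add_right_cancel_iff]
      rw [cnt m k, Nat.choose_succ_succ]; ring

/-- the support of the `k`-th free module -/
def SS (n k : ℕ) : Idx (n + 1) ⊕ Idx n → Prop :=
  Sum.elim (fun b => sz (n + 1) b + k = n + 1 ∧ k ≤ n) (fun b => sz n b + k = n + 2 ∧ k ≤ n + 1)

lemma card_SS (n k : ℕ) : Nat.card {b // SS n k b} =
    (if k ≤ n then (n + 1).choose (n + 1 - k) else 0) +
      (if k ≤ n + 1 then n.choose (n + 2 - k) else 0) := by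
  classical
  rw [Nat.card_eq_fintype_card, Fintype.card_subtype, Finset.card_filter, Fintype.sum_sum_type]
  congr 1
  · split_ifs with h
    · rw [← cnt]
      refine Finset.sum_congr rfl (fun b _ => ?_)
      simp only [SS, Sum.elim_inl]
      congr 1; apply propext; constructor <;> intro h <;> omega
    · refine Finset.sum_eq_zero (fun b _ => if_neg ?_)
      simp [SS, h]
  · split_ifs with h
    · rw [← cnt]
      refine Finset.sum_congr rfl (fun b _ => ?_)
      simp only [SS, Sum.elim_inr]
      congr 1; apply propext; constructor <;> intro h <;> omega
    · refine Finset.sum_eq_zero (fun b _ => if_neg ?_)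
      simp [SS, h]

lemma card_SS' (n : ℕ) (hn : 1 ≤ n) (k : ℕ) : Nat.card {b // SS n k b} =
    if k = 0 then 1 else if k = 1 then n + 1 else if k = n + 1 then n
        else if k ≤ n then n.choose (k - 1) + n.choose (k - 2) + n.choose k else 0 := by
  rw [card_SS]
  rcases k with _ | _ | k
  · simp
    exact Nat.choose_eq_zero_of_lt (by omega)
  · simp [hn]
  · by_cases h1 : k + 2 = n + 1
    · have : ¬ (k + 2 ≤ n) := by omega
      have e : n + 2 - (k + 2) = 1 := by omega
      simp only [Nat.add_assoc, Nat.reduceAdd, this, e, h1]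
      simp
      omega
    · by_cases h2 : k + 2 ≤ n
      · have e1 : n + 1 - (k + 2) = n + 1 - (k + 2) := rfl
        have e2 : n + 2 - (k + 2) = n - k := by omega
        have h3 : k + 1 + 1 ≤ n + 1 := by omega
        simp only [Nat.add_assoc, Nat.reduceAdd, h1, h2, if_true, if_false, e2]
        rw [if_pos (by omega), Nat.choose_symm (by omega), Nat.choose_symm (by omega),
          Nat.choose_succ_succ]
        simp
        ring
      · have h3 : ¬ (k + 2 ≤ n + 1) := by omega
        simp only [Nat.add_assoc, Nat.reduceAdd, h1, h2, h3]
        simp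

lemma supp_iff {R : Type*} [CommRing R] (n k : ℕ) (u : Idx (n + 1) ⊕ Idx n → R) :
    Supp (SS n k) u ↔
      (k ≤ n → Hom ((n : ℤ) + 1 - k) (fun b => u (Sum.inl b))) ∧
      (¬ k ≤ n → (fun b => u (Sum.inl b)) = 0) ∧
      (k ≤ n + 1 → Hom ((n : ℤ) + 2 - k) (fun b => u (Sum.inr b))) ∧
      (¬ k ≤ n + 1 → (fun b => u (Sum.inr b)) = 0) := by
  constructor
  · intro h
    refine ⟨fun hk b hb => h (Sum.inl b) ?_, fun hk => funext fun b => h (Sum.inl b) ?_,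
      fun hk b hb => h (Sum.inr b) ?_, fun hk => funext fun b => h (Sum.inr b) ?_⟩
    · simp only [SS, Sum.elim_inl]; omega
    · simp only [SS, Sum.elim_inl]; omega
    · simp only [SS, Sum.elim_inr]; omega
    · simp only [SS, Sum.elim_inr]; omega
  · rintro ⟨h1, h2, h3, h4⟩ (b | b) hb
    · simp only [SS, Sum.elim_inl] at hb
      by_cases hk : k ≤ n
      · exact h1 hk b (by omega)
      · exact congrFun (h2 hk) b
    · simp only [SS, Sum.elim_inr] at hb
      by_cases hk : k ≤ n + 1
      · exact h3 hk b (by omega)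
      · exact congrFun (h4 hk) b

/-- the differential -/
def dd {R : Type*} [CommRing R] {n : ℕ} (x : Fin (n + 1) → Fin n → R) (y : Fin n → R) :
    (Idx (n + 1) ⊕ Idx n → R) →ₗ[R] (Idx (n + 1) ⊕ Idx n → R) where
  toFun u := Sum.elim
    (L (n + 1) (gv x y) (fun b => u (Sum.inl b)) + XX (n + 1) n x (fun b => u (Sum.inr b)))
    (- L n y (fun b => u (Sum.inr b)))
  map_add' u v := by
    have e1 : (fun b => (u + v) (Sum.inl b)) = (fun b => u (Sum.inl b)) + fun b => v (Sum.inl b) := rfl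
    have e2 : (fun b => (u + v) (Sum.inr b)) = (fun b => u (Sum.inr b)) + fun b => v (Sum.inr b) := rfl
    rw [e1, e2]
    funext b
    rcases b with b | b
    · simp [L_add, XX_add]; ring
    · simp [L_add]; ring
  map_smul' r u := by
    have e1 : (fun b => (r • u) (Sum.inl b)) = r • (fun b => u (Sum.inl b)) := rfl
    have e2 : (fun b => (r • u) (Sum.inr b)) = r • (fun b => u (Sum.inr b)) := rfl
    rw [e1, e2]
    funext b
    rcases b with b | b
    · simp [L_smul, XX_smul]; ring
    · simp [L_smul]

lemma dd_eq_zero {R : Type*} [CommRing R] {n : ℕ} (x : Fin (n + 1) → Fin n → R) (y : Fin n → R)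
    (u) (h : dd x y u = 0) :
    L (n + 1) (gv x y) (fun b => u (Sum.inl b)) + XX (n + 1) n x (fun b => u (Sum.inr b)) = 0 ∧
      L n y (fun b => u (Sum.inr b)) = 0 := by
  constructor
  · funext b; exact congrFun h (Sum.inl b)
  · rw [← neg_eq_zero]; funext b; exact congrFun h (Sum.inr b)

lemma dd_dd {R : Type*} [CommRing R] {n : ℕ} (x : Fin (n + 1) → Fin n → R) (y : Fin n → R)
    (u) : dd x y (dd x y u) = 0 := by
  have key := XX_L (n + 1) n x y (fun b => u (Sum.inr b))
  funext b
  rcases b with b | b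
  · show (L (n + 1) (gv x y) (L (n + 1) (gv x y) (fun b => u (Sum.inl b)) +
      XX (n + 1) n x (fun b => u (Sum.inr b))) + XX (n + 1) n x (-L n y (fun b => u (Sum.inr b)))) b = 0
    rw [L_add, L_sq, XX_neg, key]
    simp
    exact add_neg_cancel _
  · show (- L n y (- L n y (fun b => u (Sum.inr b)))) b = 0
    rw [L_neg, L_sq]; simp

lemma core {K : Type u} [Field K] (n : ℕ)
    (x : Fin (n + 1) → Fin n → MvPolynomial ((Fin (n + 1) × Fin n) ⊕ Fin n) K)
    (y : Fin n → MvPolynomial ((Fin (n + 1) × Fin n) ⊕ Fin n) K)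
    (hx : x = fun i j => X (Sum.inl (i, j))) (hy : y = fun j => X (Sum.inr j))
    (p : ℤ) (hp1 : 1 ≤ p) (hpn : p ≤ n) (v w) (hv : Hom p v) (hw : Hom (p + 1) w)
    (h1 : L (n + 1) (gv x y) v + XX (n + 1) n x w = 0) (h2 : L n y w = 0) :
    ∃ s w', Hom (p - 1) s ∧ Hom p w' ∧ L (n + 1) (gv x y) s + XX (n + 1) n x w' = v ∧
      - L n y w' = w ∧ (p = 1 → s = 0) := by
  have hG : Gen _ (xy x y) := ⟨K, inferInstance, RingEquiv.refl _, by
    rintro (t | t) <;> simp [xy, hx, hy]⟩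
  have hGy : Gen _ y := gen_sub hG Sum.inr Sum.inr_injective
  have hw0 : ∃ w0, Hom p w0 ∧ w = L n y w0 := by
    rcases lt_trichotomy (p + 1) n with h | h | h
    · obtain ⟨w0, a, b⟩ := kos_exact n y (gen_reg n hGy) (p + 1) h w hw h2
      exact ⟨w0, by simpa using a, b⟩
    · obtain ⟨ρ, r1, r2, r3⟩ := gen_kill hG (Set.range Sum.inr)
      have rx : ∀ i j, ρ (x i j) = x i j := fun i j => r2 (Sum.inl (i, j)) (by simp)
      have ry : ∀ j, ρ (y j) = 0 := fun j => r1 (Sum.inr j) ⟨j, rfl⟩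
      have a1 := congrArg (em (ρ : _ →+ MvPolynomial ((Fin (n + 1) × Fin n) ⊕ Fin n) K)) h1
      rw [em_add, em_zero, em_L _ _ (gv x y) (fun _ => 0), L_gzero, zero_add,
        em_XX _ _ _ x x] at a1
      · have a2 : em (ρ : _ →+ MvPolynomial ((Fin (n + 1) × Fin n) ⊕ Fin n) K) w = 0 := by
          apply XX_inj n
          rwa [hx] at a1
        have a3 : ρ (w (tp n)) = 0 := congrFun a2 (tp n)
        have a4 := r3 (w (tp n))
        rw [a3, sub_zero] at a4
        have e : xy x y '' Set.range Sum.inr = Set.range y := by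
          rw [← Set.range_comp]; rfl
        rw [e] at a4
        rw [h] at hw
        obtain ⟨w0, b1, b2⟩ := top_bdry n y w hw a4
        refine ⟨w0, ?_, b2⟩
        have : p = n - 1 := by omega
        rwa [this]
      · intro i j r
        show ρ _ = _ * ρ r
        rw [map_mul, rx]
      · intro i r
        show ρ _ = 0 * ρ r
        rw [map_mul]
        simp [gv, ry]
    · exact ⟨0, Hom_zero, by rw [L_zero]; exact Hom_big hw h⟩
  obtain ⟨w0, hw0, rfl⟩ := hw0
  rw [XX_L] at h1
  have h3 : L (n + 1) (gv x y) (v + XX (n + 1) n x w0) = 0 := by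
    rw [L_add]; exact h1
  have hH : Hom p (v + XX (n + 1) n x w0) := Hom_add hv (Hom_XX _ hw0)
  obtain ⟨s, w2, hw2, hs⟩ := claim (n + 1) n le_rfl _ x y hG p (by push_cast; omega) _ hH h3
  obtain ⟨s, w2, hsH, hw2H, hw2, hs⟩ := grade hH hw2 hs
  by_cases hp : p = 1
  · obtain ⟨r, hr⟩ := Hom0_cst (n + 1) (u := s) (by simpa [hp] using hsH)
    have hcH : Hom 0 (cst n r : Idx n → MvPolynomial ((Fin (n + 1) × Fin n) ⊕ Fin n) K) := by
      apply Hom_of_pj; rw [pj_cst, if_pos rfl]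
    have hcy := Hom_L y hcH
    refine ⟨0, w2 - w0 + L n y (cst n r), Hom_zero, ?_, ?_, ?_, fun _ => rfl⟩
    · refine Hom_add (Hom_sub hw2H hw0) ?_
      rw [hp]; simpa using hcy
    · rw [L_zero, zero_add, XX_add, XX_sub, XX_L, XX_cst, ← hr]
      have hs' : v = L (n + 1) (gv x y) s + XX (n + 1) n x w2 - XX (n + 1) n x w0 := by
        rw [← hs]; abel
      rw [hs']
      show _ + L (n + 1) (gv x y) s = _
      abel
    · rw [L_add, L_sub, L_sq, hw2]; simp
  · refine ⟨s, w2 - w0, hsH, Hom_sub hw2H hw0, ?_, ?_, fun h => (hp h).elim⟩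
    · rw [XX_sub]
      have hs' : v = L (n + 1) (gv x y) s + XX (n + 1) n x w2 - XX (n + 1) n x w0 := by
        rw [← hs]; abel
      rw [hs']; abel
    · rw [L_sub, hw2]; simp
end BettiAux

open BettiAux

/-- With `X̂` the generic `(n+1)×n` matrix and `J = I₁(X̂Y) = ⟨g 1, …, g (n+1)⟩`, the
total Betti numbers of `R̂/J` are `β 0 = 1`, `β 1 = n+1`,
`β (k+1) = n.choose k + n.choose (k−1) + n.choose (k+1)` for `1 ≤ k < n`, and
`β (n+1) = n`. -/
theorem betti_numbers_I1XY_extra_row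
    {K : Type*} [Field K] (n : ℕ) (hn : 1 ≤ n)
    (Xv : Fin (n + 1) → Fin n → MvPolynomial ((Fin (n + 1) × Fin n) ⊕ Fin n) K)
    (yv : Fin n → MvPolynomial ((Fin (n + 1) × Fin n) ⊕ Fin n) K)
    (hX : ∀ i j, Xv i j = MvPolynomial.X (Sum.inl (i, j)))
    (hy : ∀ j, yv j = MvPolynomial.X (Sum.inr j))
    (g : Fin (n + 1) → MvPolynomial ((Fin (n + 1) × Fin n) ⊕ Fin n) K)
    (hg : ∀ i, g i = ∑ j, Xv i j * yv j) :
    IsMinimalFreeRes (Ideal.span (Set.range (MvPolynomial.X :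
        ((Fin (n + 1) × Fin n) ⊕ Fin n) → MvPolynomial ((Fin (n + 1) × Fin n) ⊕ Fin n) K)))
      (MvPolynomial ((Fin (n + 1) × Fin n) ⊕ Fin n) K ⧸ Ideal.span (Set.range g))
      (fun i => if i = 0 then 1 else if i = 1 then n + 1 else if i = n + 1 then n
        else if i ≤ n then n.choose (i - 1) + n.choose (i - 2) + n.choose i else 0) := by
  have hX' : Xv = fun i j => X (Sum.inl (i, j)) := by funext i j; exact hX i j
  have hy' : yv = fun j => X (Sum.inr j) := by funext j; exact hy j
  have hg' : g = gv Xv yv := by funext i; exact hg i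
  have mX : ∀ i j, Xv i j ∈ Ideal.span (Set.range (MvPolynomial.X :
      ((Fin (n + 1) × Fin n) ⊕ Fin n) → MvPolynomial ((Fin (n + 1) × Fin n) ⊕ Fin n) K)) :=
    fun i j => by rw [hX]; exact Ideal.subset_span ⟨_, rfl⟩
  have my : ∀ j, yv j ∈ Ideal.span (Set.range (MvPolynomial.X :
      ((Fin (n + 1) × Fin n) ⊕ Fin n) → MvPolynomial ((Fin (n + 1) × Fin n) ⊕ Fin n) K)) :=
    fun j => by rw [hy]; exact Ideal.subset_span ⟨_, rfl⟩
  have mg : ∀ i, gv Xv yv i ∈ Ideal.span (Set.range (MvPolynomial.X :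
      ((Fin (n + 1) × Fin n) ⊕ Fin n) → MvPolynomial ((Fin (n + 1) × Fin n) ⊕ Fin n) K)) :=
    fun i => Ideal.sum_mem _ (fun j _ => Ideal.mul_mem_left _ _ (my j))
  refine assemble _ (dd Xv yv) (SS n) _ (card_SS' n hn) ?_ (dd_dd Xv yv) ?_ ?_
    ((Submodule.mkQ (Ideal.span (Set.range g))).comp (LinearMap.proj (Sum.inl (tp (n + 1))))) ?_ ?_
  · intro k u hu
    rw [supp_iff] at hu ⊢
    obtain ⟨h1, h2, h3, h4⟩ := hu
    refine ⟨fun hk => ?_, fun hk => ?_, fun hk => ?_, fun hk => ?_⟩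
    · refine Hom_add (i := (n : ℤ) + 1 - k) (u := L (n + 1) (gv Xv yv) _) (v := XX (n + 1) n Xv _) ?_ ?_
      · by_cases hk' : k + 1 ≤ n
        · have := Hom_L (gv Xv yv) (h1 hk')
          have e : (n : ℤ) + 1 - (k + 1 : ℕ) + 1 = n + 1 - k := by push_cast; ring
          rwa [e] at this
        · rw [h2 hk', L_zero]; exact Hom_zero
      · have := Hom_XX Xv (h3 (by omega))
        have e : (n : ℤ) + 2 - (k + 1 : ℕ) = n + 1 - k := by push_cast; ring
        rwa [e] at this
    · show L (n + 1) (gv Xv yv) (fun b => u (Sum.inl b)) + XX (n + 1) n Xv (fun b => u (Sum.inr b)) = 0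
      rw [h2 (by omega), h4 (by omega), L_zero, XX_zero, add_zero]
    · refine Hom_neg (i := (n : ℤ) + 2 - k) (u := L n yv _) ?_
      by_cases hk' : k + 1 ≤ n + 1
      · have := Hom_L yv (h3 hk')
        have e : (n : ℤ) + 2 - (k + 1 : ℕ) + 1 = n + 2 - k := by push_cast; ring
        rwa [e] at this
      · rw [h4 hk', L_zero]; exact Hom_zero
    · show - L n yv (fun b => u (Sum.inr b)) = 0
      rw [h4 (by omega), L_zero, neg_zero]
  · intro k u hu b
    rw [supp_iff] at hu
    obtain ⟨h1, h2, h3, h4⟩ := hu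
    rcases b with b | b
    · refine Ideal.add_mem _ (L_mem _ _ _ mg _ _) ?_
      by_cases hk : k + 1 ≤ n + 1
      · exact XX_mem _ _ _ _ mX _ (by push_cast; omega) _ (h3 hk) b
      · rw [h4 hk, XX_zero]; exact Ideal.zero_mem _
    · exact Ideal.neg_mem_iff _ |>.2 (L_mem _ _ _ my _ _)
  · intro k u hu h0
    rw [supp_iff] at hu
    obtain ⟨h1, h2, h3, h4⟩ := hu
    obtain ⟨z1, z2⟩ := dd_eq_zero _ _ _ h0
    by_cases hk : k + 1 ≤ n
    · obtain ⟨s, w, hs, hw, e1, e2, e3⟩ := core n Xv yv hX' hy' ((n : ℤ) - k) (by omega) (by omega)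
        (fun b => u (Sum.inl b)) (fun b => u (Sum.inr b))
        (by
          have := h1 hk
          have e : (n : ℤ) + 1 - (k + 1 : ℕ) = n - k := by push_cast; ring
          rwa [e] at this)
        (by
          have := h3 (by omega)
          have e : (n : ℤ) + 2 - (k + 1 : ℕ) = n - k + 1 := by push_cast; ring
          rwa [e] at this) z1 z2
      refine ⟨Sum.elim s w, ?_, ?_⟩
      · rw [supp_iff]
        refine ⟨fun hk' => ?_, fun hk' => ?_, fun hk' => ?_, fun hk' => ?_⟩
        · have e : (n : ℤ) + 1 - (k + 2 : ℕ) = n - k - 1 := by push_cast; ring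
          rw [e]; exact hs
        · exact e3 (by omega)
        · have e : (n : ℤ) + 2 - (k + 2 : ℕ) = n - k := by push_cast; ring
          rw [e]; exact hw
        · omega
      · funext b
        rcases b with b | b
        · exact congrFun e1 b
        · exact congrFun e2 b
    · refine ⟨0, fun _ _ => rfl, ?_⟩
      rw [map_zero]
      have hl := h2 hk
      rw [hl, L_zero, zero_add, hX'] at z1
      have hr := XX_inj n _ z1
      funext b
      rcases b with b | b
      · exact (congrFun hl b).symm
      · exact (congrFun hr b).symm
  · intro q
    obtain ⟨r, rfl⟩ := Submodule.mkQ_surjective _ q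
    refine ⟨Sum.elim (fun b => if sz (n + 1) b = n + 1 then r else 0) 0, ?_, ?_⟩
    · rintro (b | b) hb
      · simp only [SS, Sum.elim_inl] at hb ⊢
        rw [if_neg (by omega)]
      · rfl
    · simp [sz_tp]
  · intro u hu
    rw [supp_iff] at hu
    obtain ⟨h1, -, h3, -⟩ := hu
    have hr : (fun b => u (Sum.inr b)) = 0 := Hom_big (h3 (by omega)) (by simp)
    have hl : Hom ((n + 1 : ℕ) : ℤ) (fun b => u (Sum.inl b)) := by
      have := h1 (by omega)
      simpa using this
    have e0 : ((Submodule.mkQ (Ideal.span (Set.range g))).comp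
        (LinearMap.proj (Sum.inl (tp (n + 1))))) u = 0 ↔
        u (Sum.inl (tp (n + 1))) ∈ Ideal.span (Set.range g) := by
      simp [Ideal.Quotient.eq_zero_iff_mem]
    rw [e0, hg']
    constructor
    · intro h
      obtain ⟨v, hv, e⟩ := top_bdry (n + 1) (gv Xv yv) _ hl h
      refine ⟨Sum.elim v 0, ?_, ?_⟩
      · rw [supp_iff]
        refine ⟨fun hk' => ?_, fun hk' => ?_, fun hk' => Hom_zero, fun hk' => rfl⟩
        · have e : (n : ℤ) + 1 - (1 : ℕ) = ((n + 1 : ℕ) : ℤ) - 1 := by push_cast; ring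
          rw [e]; exact hv
        · omega
      · funext b
        rcases b with b | b
        · show (L (n + 1) (gv Xv yv) v + XX (n + 1) n Xv 0) b = _
          rw [← e, XX_zero, add_zero]
        · show (- L n yv 0) b = _
          rw [L_zero, neg_zero]; exact (congrFun hr b).symm
    · rintro ⟨v, hv, rfl⟩
      rw [supp_iff] at hv
      obtain ⟨-, -, h3', -⟩ := hv
      have hr' : (fun b => v (Sum.inr b)) = 0 :=
        Hom_big (h3' (by omega)) (by push_cast; omega)
      show (L (n + 1) (gv Xv yv) (fun b => v (Sum.inl b)) +
        XX (n + 1) n Xv (fun b => v (Sum.inr b))) (tp (n + 1)) ∈ _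
      rw [hr', XX_zero, add_zero]
      exact L_mem _ _ _ (fun i => Ideal.subset_span (Set.mem_range_self i)) _ _
end
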